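/- arXiv:math/0312280 — 6 statements merged into one kernel-verified Lean document; each statement's English description precedes it below -/
import Mathlib

section
/- Let k be an algebraically closed field and let φ : A → B be a homomorphism of finitely generated commutative k-algebras, corresponding to a morphism f : Spec B → Spec A of finite type affine k-schemes. Then there exists a positive integer n such that for every prime ideal p of A, every nilpotent element of the fiber ring B ⊗_A κ(p) has n-th power equal to zero, where κ(p) denotes the residue field of A at p (the fraction field of A/p). In other words, the radical index of every fiber of f is at most n. -/
open TensorProduct

/-!
The bound is proved for `B ⊗[A] κ` with `κ` any field over `A`, by Noetherian induction on an ideal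
`J` of `B`, the claim being that a single exponent sends the radical of the extended ideal
`J (B ⊗[A] κ)` into `J (B ⊗[A] κ)` for all `κ`. It suffices to find `b ∉ J` and `r` such that
`b x ^ r` lies in the extended ideal for all `x` in its radical, because the exponent of
`J + (b)` can then be increased by `r`. If `J` is not prime, one of the factors of a product in `J`
serves as `b`.

If `J` is prime, put `C = B ⧸ J`; we may assume that `A` is a subring of `C`. By Noether
normalization over the fraction field of `A`, some localization `E = C_f` with `0 ≠ f ∈ A` is finite
over a polynomial ring `P = A_f[t]`. There are maps `j : E → Pⁿ` and `i : Pⁿ → E` of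
`P`-modules whose composite is multiplication by some `g ≠ 0`. They survive the base change to the
domain `κ[t]`, so Cayley–Hamilton over `κ[t]` gives `g ^ (n + 1) x ^ n = 0` for every nilpotent
`x ∈ C ⊗[A] κ` as soon as `f` is nonzero in `κ`. If `f` is zero in `κ`, then already `f x = 0`.
-/

open scoped nonZeroDivisors

universe u v w

/-! ### Finite modules over a domain -/

theorem exists_injective_smul_mem_range_of_finite (R M : Type*) [CommRing R] [IsDomain R]
    [AddCommGroup M] [Module R M] [Module.Finite R M] :
    ∃ g : R, g ≠ 0 ∧ ∃ (n : ℕ) (i : (Fin n → R) →ₗ[R] M),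
      Function.Injective i ∧ ∀ m, g • m ∈ LinearMap.range i := by
  obtain ⟨k, v, hv⟩ := Module.Finite.exists_fin (R := R) (M := M)
  obtain ⟨s, hs, hmax⟩ := exists_maximal_linearIndepOn R v
  have htorsion (l : Fin k) : ∃ a : R, a ≠ 0 ∧ a • v l ∈ Submodule.span R (v '' s) := by
    by_cases hl : l ∈ s
    · exact ⟨1, one_ne_zero, by simpa using Submodule.subset_span (Set.mem_image_of_mem v hl)⟩
    · exact hmax l hl
  choose a ha0 ha using htorsion
  let e := Finite.equivFin s
  have hrange : LinearMap.range (Fintype.linearCombination R (fun l ↦ v (e.symm l))) =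
      Submodule.span R (v '' s) := by
    rw [Fintype.range_linearCombination, Set.image_eq_range]
    exact congrArg _ (e.symm.surjective.range_comp fun l : s ↦ v l)
  refine ⟨∏ l, a l, Finset.prod_ne_zero_iff.2 fun l _ ↦ ha0 l, Nat.card s,
    Fintype.linearCombination R (fun l ↦ v (e.symm l)), ?_, fun m ↦ ?_⟩
  · exact (hs.comp e.symm e.symm.injective).fintypeLinearCombination_injective
  · rw [hrange]
    have hm : m ∈ Submodule.span R (Set.range v) := hv ▸ Submodule.mem_top
    induction hm using Submodule.span_induction with
    | mem m hm =>
      obtain ⟨l, rfl⟩ := hm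
      obtain ⟨b, hb⟩ := Finset.dvd_prod_of_mem a (Finset.mem_univ l)
      rw [hb, mul_comm, mul_smul]
      exact Submodule.smul_mem _ b (ha l)
    | zero => simp
    | add x y _ _ hx hy => simpa only [smul_add] using add_mem hx hy
    | smul c x _ hx => simpa only [smul_comm _ c] using Submodule.smul_mem _ c hx

theorem exists_comp_eq_smul_id_of_finite (R M : Type*) [CommRing R] [IsDomain R]
    [AddCommGroup M] [Module R M] [Module.Finite R M] :
    ∃ g : R, g ≠ 0 ∧ ∃ (n : ℕ) (i : (Fin n → R) →ₗ[R] M) (j : M →ₗ[R] Fin n → R),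
      i ∘ₗ j = g • LinearMap.id := by
  obtain ⟨g, hg, n, i, hi, hrange⟩ := exists_injective_smul_mem_range_of_finite R M
  let j := (LinearEquiv.ofInjective i hi).symm.toLinearMap ∘ₗ
    (g • LinearMap.id : M →ₗ[R] M).codRestrict (LinearMap.range i) hrange
  refine ⟨g, hg, n, i, j, LinearMap.ext fun m ↦ ?_⟩
  exact congrArg Subtype.val ((LinearEquiv.ofInjective i hi).apply_symm_apply _)

theorem pow_smul_pow_eq_zero_of_comp_eq_smul_id {R F M : Type*} [CommRing R] [IsDomain R]
    [AddCommGroup F] [Module R F] [Module.Free R F] [Module.Finite R F]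
    [AddCommGroup M] [Module R M]
    {i : F →ₗ[R] M} {j : M →ₗ[R] F} {g : R} (hij : i ∘ₗ j = g • LinearMap.id)
    {φ : Module.End R M} (hφ : IsNilpotent φ) :
    g ^ (Module.finrank R F + 1) • φ ^ Module.finrank R F = 0 := by
  let ψ : Module.End R F := j ∘ₗ φ ∘ₗ i
  have hsemiconj (k : ℕ) : (g ^ k • φ ^ k) ∘ₗ i = i ∘ₗ ψ ^ k := by
    rw [← smul_pow]
    refine Module.End.commute_pow_left_of_commute ?_ k
    rw [← LinearMap.comp_assoc, hij]
    rfl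
  have hψ : IsNilpotent ψ := by
    obtain ⟨k, hk⟩ := hφ
    refine ⟨k + 1, ?_⟩
    calc ψ ^ (k + 1) = j ∘ₗ φ ∘ₗ (i ∘ₗ ψ ^ k) := pow_succ' ψ k
      _ = 0 := by rw [← hsemiconj, hk]; simp
  have hψ_pow : ψ ^ Module.finrank R F = 0 := by
    simpa [hψ.charpoly_eq_X_pow_finrank] using ψ.aeval_self_charpoly
  calc g ^ (Module.finrank R F + 1) • φ ^ Module.finrank R F
      = (g ^ Module.finrank R F • φ ^ Module.finrank R F) ∘ₗ (i ∘ₗ j) := by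
        rw [hij, LinearMap.comp_smul, LinearMap.comp_id, smul_smul, pow_succ']
    _ = 0 := by rw [← LinearMap.comp_assoc, hsemiconj, hψ_pow]; simp

theorem exists_smul_pow_eq_zero_of_finite (P E : Type*) [CommRing P] [IsDomain P]
    [CommRing E] [Algebra P E] [Module.Finite P E] :
    ∃ g : P, g ≠ 0 ∧ ∃ n : ℕ, ∀ (Q : Type w) [CommRing Q] [IsDomain Q] [Algebra P Q]
      (x : Q ⊗[P] E), IsNilpotent x → g • x ^ n = 0 := by
  obtain ⟨g, hg, n, i, j, hij⟩ := exists_comp_eq_smul_id_of_finite P E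
  refine ⟨g ^ (n + 1), pow_ne_zero _ hg, n, fun Q _ _ _ x hx ↦ ?_⟩
  have hijQ : i.baseChange Q ∘ₗ j.baseChange Q = algebraMap P Q g • LinearMap.id := by
    rw [← LinearMap.baseChange_comp, hij, LinearMap.baseChange_smul, LinearMap.baseChange_id,
      algebraMap_smul]
  have hzero := pow_smul_pow_eq_zero_of_comp_eq_smul_id hijQ (hx.map (Algebra.lmul Q (Q ⊗[P] E)))
  rw [Module.finrank_baseChange, Module.finrank_fin_fun, ← map_pow, ← map_pow,
    algebraMap_smul] at hzero
  simpa using LinearMap.congr_fun hzero 1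

/-! ### Noether normalization over a domain -/

theorem includeRight_injective_of_isFractionRing {A C : Type*} (K : Type*) [CommRing A]
    [CommRing C] [Algebra A C] [Module.IsTorsionFree A C] [CommRing K] [Algebra A K]
    [IsFractionRing A K] :
    Function.Injective (Algebra.TensorProduct.includeRight : C →ₐ[A] K ⊗[A] C) := by
  rw [injective_iff_map_eq_zero]
  intro c hc
  obtain ⟨a, ha⟩ := (IsLocalizedModule.eq_zero_iff A⁰ (TensorProduct.mk A K C 1)).1 hc
  exact (isRegular_iff_mem_nonZeroDivisors.2 a.2).smul_eq_zero_iff_right.1 ha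

/-- The automorphism of a polynomial ring multiplying every variable by the unit `a`, used to clear
the denominators in a Noether normalization over a fraction field. -/
noncomputable def mvPolynomialScale (σ : Type*) {K : Type*} [CommRing K] (a : Kˣ) :
    MvPolynomial σ K ≃ₐ[K] MvPolynomial σ K :=
  AlgEquiv.ofAlgHom (MvPolynomial.aeval fun l ↦ (a : K) • MvPolynomial.X l)
    (MvPolynomial.aeval fun l ↦ (↑a⁻¹ : K) • MvPolynomial.X l)
    (by ext l : 1; simp [smul_smul]) (by ext l : 1; simp [smul_smul])

theorem exists_injective_isIntegral_algHom_map_eq_one_tmul (A K C : Type*) [CommRing A] [CommRing C]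
    [Algebra A C] [Algebra.FiniteType A C] [Field K] [Algebra A K] [IsFractionRing A K]
    [Nontrivial (K ⊗[A] C)] :
    ∃ (d : ℕ) (h : MvPolynomial (Fin d) A →ₐ[A] C) (g : MvPolynomial (Fin d) K →ₐ[K] K ⊗[A] C),
      Function.Injective g ∧ g.toRingHom.IsIntegral ∧
        ∀ p, g (MvPolynomial.map (algebraMap A K) p) = 1 ⊗ₜ h p := by
  obtain ⟨d, g, hg, hint⟩ := exists_integral_inj_algHom_of_fg K (K ⊗[A] C)
  obtain ⟨a, ha⟩ := IsLocalizedModule.exist_integer_multiples_of_finite A⁰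
    (TensorProduct.mk A K C 1) fun l ↦ g (MvPolynomial.X l)
  choose c hc using ha
  have hu : IsUnit (algebraMap A K a) := IsLocalization.map_units K a
  let scale := mvPolynomialScale (Fin d) hu.unit
  refine ⟨d, MvPolynomial.aeval c, g.comp scale.toAlgHom, hg.comp scale.injective,
    .trans _ _ (RingHom.isIntegral_of_surjective _ scale.surjective) hint, fun p ↦ ?_⟩
  suffices hcomp : ((g.comp scale.toAlgHom).restrictScalars A).comp
      (MvPolynomial.mapAlgHom (Algebra.ofId A K)) =
      (Algebra.TensorProduct.includeRight : C →ₐ[A] K ⊗[A] C).comp (MvPolynomial.aeval c) from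
    DFunLike.congr_fun hcomp p
  ext l
  simpa [scale, mvPolynomialScale, Submonoid.smul_def, Algebra.smul_def] using (hc l).symm

section

attribute [local instance] MvPolynomial.algebraMvPolynomial

theorem exists_injective_algHom_forall_isIntegralElem_smul (A C : Type*) [CommRing A] [IsDomain A]
    [CommRing C] [Nontrivial C] [Algebra A C] [Algebra.FiniteType A C] [Module.IsTorsionFree A C] :
    ∃ (d : ℕ) (h : MvPolynomial (Fin d) A →ₐ[A] C), Function.Injective h ∧
      ∀ c : C, ∃ a : A, a ≠ 0 ∧ h.toRingHom.IsIntegralElem (a • c) := by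
  let K := FractionRing A
  have hincl : Function.Injective (Algebra.TensorProduct.includeRight : C →ₐ[A] K ⊗[A] C) :=
    includeRight_injective_of_isFractionRing K
  have : Nontrivial (K ⊗[A] C) := hincl.nontrivial
  obtain ⟨d, h, g, hg, hint, hgh⟩ := exists_injective_isIntegral_algHom_map_eq_one_tmul A K C
  have hmap : Function.Injective (MvPolynomial.map (σ := Fin d) (algebraMap A K)) :=
    MvPolynomial.map_injective _ (IsFractionRing.injective A K)
  refine ⟨d, h, fun p q hpq ↦ hmap (hg ?_), fun c ↦ ?_⟩
  · rw [hgh, hgh, hpq]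
  · algebraize [h.toRingHom, g.toRingHom, g.toRingHom.comp (MvPolynomial.map (algebraMap A K))]
    obtain ⟨⟨_, a, ha, rfl⟩, hac⟩ :=
      IsIntegral.exists_multiple_integral_of_isLocalization
        (A⁰.map (MvPolynomial.C (σ := Fin d))) _ (hint (1 ⊗ₜ[A] c))
    refine ⟨a, nonZeroDivisors.ne_zero ha, ?_⟩
    let ι : C →ₐ[MvPolynomial (Fin d) A] K ⊗[A] C :=
      { (Algebra.TensorProduct.includeRight : C →ₐ[A] K ⊗[A] C) with
        commutes' := fun p ↦ (hgh p).symm }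
    have hsmul : a • c = MvPolynomial.C (σ := Fin d) a • c := by
      rw [Algebra.smul_def, ← h.commutes a]
      rfl
    rw [hsmul]
    exact (isIntegral_algHom_iff ι hincl).1 ((map_smul ι _ c).symm ▸ hac)

end

theorem finite_of_adjoin_eq_top_of_isIntegralElem {S P E : Type*} [CommRing S] [CommRing P]
    [CommRing E] [Algebra S P] [Algebra S E] (φ : P →ₐ[S] E) {t : Set E} (ht : t.Finite)
    (htop : Algebra.adjoin S t = ⊤) (hint : ∀ x ∈ t, φ.toRingHom.IsIntegralElem x) :
    φ.Finite := by
  algebraize [φ.toRingHom]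
  have htopP : Algebra.adjoin P t = ⊤ := by
    have hle : Algebra.adjoin S t ≤ (Algebra.adjoin P t).restrictScalars S :=
      Algebra.adjoin_le Algebra.subset_adjoin
    exact top_le_iff.1 fun x _ ↦ hle (htop ▸ Algebra.mem_top)
  refine ⟨?_⟩
  rw [← Algebra.top_toSubmodule, ← htopP]
  exact fg_adjoin_of_finite ht hint

theorem isIntegralElem_of_isUnit_smul {R P E : Type*} [CommRing R] [CommRing P] [CommRing E]
    [Algebra R P] [Algebra R E] (φ : P →ₐ[R] E) {u : R} (hu : IsUnit u) {x : E}
    (hx : φ.toRingHom.IsIntegralElem (u • x)) : φ.toRingHom.IsIntegralElem x := by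
  have hmul : x = φ (algebraMap R P ↑hu.unit⁻¹) * u • x := by
    rw [φ.commutes, ← Algebra.smul_def, smul_smul, hu.val_inv_mul, one_smul]
  rw [hmul]
  exact RingHom.IsIntegralElem.mul _ φ.toRingHom.isIntegralElem_map hx

open Algebra.TensorProduct in
theorem exists_injective_finite_algHom_localizationAway (A C : Type*) [CommRing A] [IsDomain A]
    [CommRing C] [Nontrivial C] [Algebra A C] [Algebra.FiniteType A C]
    [Module.IsTorsionFree A C] :
    ∃ f : A, f ≠ 0 ∧ ∃ (d : ℕ) (φ : MvPolynomial (Fin d) (Localization.Away f)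
      →ₐ[Localization.Away f] Localization.Away f ⊗[A] C), Function.Injective φ ∧ φ.Finite := by
  obtain ⟨d, h, hinj, hint⟩ := exists_injective_algHom_forall_isIntegralElem_smul A C
  obtain ⟨s, hs⟩ := Algebra.FiniteType.out (R := A) (A := C)
  choose a ha0 ha using hint
  let f := ∏ c ∈ s, a c
  let S := Localization.Away f
  let φ : MvPolynomial (Fin d) S →ₐ[S] S ⊗[A] C :=
    (Algebra.TensorProduct.map (AlgHom.id S S) h).comp
      (MvPolynomial.algebraTensorAlgEquiv A S).symm.toAlgHom
  have hφ_inj : Function.Injective φ :=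
    (Module.Flat.lTensor_preserves_injective_linearMap (M := S) h.toLinearMap hinj).comp
      (MvPolynomial.algebraTensorAlgEquiv A S).symm.injective
  have hφ_comp : φ.toRingHom.comp (MvPolynomial.map (algebraMap A S)) =
      (includeRight : C →ₐ[A] S ⊗[A] C).toRingHom.comp h.toRingHom :=
    RingHom.ext fun p ↦ by simp [φ]
  refine ⟨f, Finset.prod_ne_zero_iff.2 fun c _ ↦ ha0 c, d, φ, hφ_inj, ?_⟩
  refine finite_of_adjoin_eq_top_of_isIntegralElem φ (s.finite_toSet.image _)
    (adjoin_one_tmul_image_eq_top _ hs) (Set.forall_mem_image.2 fun c hc ↦ ?_)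
  have hunit : IsUnit (algebraMap A S (a c)) :=
    isUnit_of_dvd_unit (map_dvd _ (Finset.dvd_prod_of_mem a hc))
      (IsLocalization.Away.algebraMap_isUnit f)
  refine isIntegralElem_of_isUnit_smul φ hunit
    (RingHom.IsIntegralElem.of_comp (f := MvPolynomial.map (algebraMap A S)) ?_)
  rw [hφ_comp, algebraMap_smul, ← TensorProduct.tmul_smul]
  exact (ha c).map (includeRight : C →ₐ[A] S ⊗[A] C).toRingHom

/-! ### Annihilators of nilpotent elements of the fibers -/

/-- `c` kills the `n`-th power of every nilpotent element of every fiber `C ⊗[A] κ`. The fibers are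
taken over arbitrary fields `κ` (in a fixed universe) rather than over residue fields, so that the
notion is insensitive to replacing `A` by a quotient or a localization. -/
def KillsFiberNilpotents (A : Type u) {C : Type v} [CommRing A] [CommRing C] [Algebra A C] (c : C)
    (n : ℕ) : Prop :=
  ∀ (κ : Type w) [Field κ] [Algebra A κ] (x : C ⊗[A] κ), IsNilpotent x → c • x ^ n = 0

theorem isDomain_mvPolynomial_tensor (S κ σ : Type*) [CommRing S] [CommRing κ] [IsDomain κ]
    [Algebra S κ] : IsDomain (MvPolynomial σ S ⊗[S] κ) :=
  ((Algebra.TensorProduct.comm S (MvPolynomial σ S) κ).toRingEquiv.trans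
    (MvPolynomial.algebraTensorAlgEquiv S κ).toRingEquiv).toMulEquiv.isDomain _

theorem exists_killsFiberNilpotents_of_finite_mvPolynomial {S E σ : Type*} [CommRing S] [IsDomain S]
    [CommRing E] [Algebra S E] (φ : MvPolynomial σ S →ₐ[S] E) (hφ : φ.Finite) :
    ∃ g : MvPolynomial σ S, g ≠ 0 ∧ ∃ n : ℕ, KillsFiberNilpotents.{_, _, w} S (φ g) n := by
  algebraize [φ.toRingHom]
  have : Module.Finite (MvPolynomial σ S) E := hφ
  obtain ⟨g, hg, n, hn⟩ := exists_smul_pow_eq_zero_of_finite (MvPolynomial σ S) E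
  refine ⟨g, hg, n, fun κ _ _ x hx ↦ ?_⟩
  have := isDomain_mvPolynomial_tensor S κ σ
  let e := ((Algebra.TensorProduct.comm (MvPolynomial σ S) (MvPolynomial σ S ⊗[S] κ) E).trans
    (Algebra.TensorProduct.cancelBaseChange S (MvPolynomial σ S) (MvPolynomial σ S) E κ)).symm
  have hzero : g • x ^ n = 0 := e.injective <| by
    rw [map_smul, map_pow, hn _ (e x) (hx.map e), map_zero]
  rw [← hzero]
  exact algebraMap_smul E g (x ^ n)

theorem smul_eq_zero_of_algebraMap_right_eq_zero {A C κ : Type*} [CommRing A] [CommRing C]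
    [Algebra A C] [CommRing κ] [Algebra A κ] {a : A} (ha : algebraMap A κ a = 0) (x : C ⊗[A] κ) :
    a • x = 0 := by
  rw [Algebra.smul_def, ← (Algebra.TensorProduct.includeRight : κ →ₐ[A] C ⊗[A] κ).commutes a, ha,
    map_zero, zero_mul]

section

variable (A S C κ : Type*) [CommRing A] [CommRing S] [CommRing C] [CommRing κ]
  [Algebra A S] [Algebra A C] [Algebra A κ] [Algebra S κ] [IsScalarTower A S κ]

/-- The fiber of `C` over an `S`-algebra `κ`, computed after base change of `C` to `S`. -/
noncomputable def fiberBaseChangeEquiv : C ⊗[A] κ ≃ₐ[A] (S ⊗[A] C) ⊗[S] κ :=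
  (Algebra.TensorProduct.comm A C κ).trans <|
    ((Algebra.TensorProduct.cancelBaseChange A S S κ C).symm.restrictScalars A).trans
      ((Algebra.TensorProduct.comm S κ (S ⊗[A] C)).restrictScalars A)

theorem fiberBaseChangeEquiv_smul (c : C) (x : C ⊗[A] κ) :
    fiberBaseChangeEquiv A S C κ (c • x) = ((1 : S) ⊗ₜ[A] c) • fiberBaseChangeEquiv A S C κ x := by
  induction x with
  | zero => simp
  | add x y hx hy => simp only [smul_add, map_add, hx, hy]
  | tmul b k => simp [fiberBaseChangeEquiv, TensorProduct.smul_tmul']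

end

theorem KillsFiberNilpotents.exists_of_localizationAway {A : Type u} {C : Type v} [CommRing A]
    [IsDomain A] [CommRing C] [Algebra A C] [Module.IsTorsionFree A C] {f : A} (hf : f ≠ 0)
    {e : Localization.Away f ⊗[A] C} (he : e ≠ 0) {n : ℕ}
    (hkill : KillsFiberNilpotents.{_, _, w} (Localization.Away f) e n) :
    ∃ c : C, c ≠ 0 ∧ KillsFiberNilpotents.{_, _, w} A c n := by
  let S := Localization.Away f
  obtain ⟨c, s, hc⟩ : ∃ (c : C) (s : Submonoid.powers f), (1 : S) ⊗ₜ[A] c = (s : A) • e :=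
    have ⟨⟨c, s⟩, hcs⟩ := IsLocalizedModule.surj (.powers f) (TensorProduct.mk A S C 1) e
    ⟨c, s, hcs.symm⟩
  have hc0 : c ≠ 0 := by
    rintro rfl
    rw [tmul_zero, ← algebraMap_smul S (s : A) e] at hc
    exact he ((IsLocalization.map_units S s).smul_eq_zero.1 hc.symm)
  refine ⟨f • c, smul_ne_zero hf hc0, fun κ _ _ x hx ↦ ?_⟩
  rw [smul_assoc]
  by_cases hfκ : algebraMap A κ f = 0
  · exact smul_eq_zero_of_algebraMap_right_eq_zero hfκ _
  · algebraize [IsLocalization.Away.lift (S := S) f (isUnit_iff_ne_zero.2 hfκ)]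
    have : IsScalarTower A S κ := .of_algebraMap_eq fun a ↦
      (IsLocalization.Away.lift_eq f (isUnit_iff_ne_zero.2 hfκ) a).symm
    have hcx : c • x ^ n = 0 := (fiberBaseChangeEquiv A S C κ).injective <| by
      rw [fiberBaseChangeEquiv_smul, hc, smul_assoc, map_pow, hkill κ _ (hx.map _), smul_zero,
        map_zero]
    rw [hcx, smul_zero]

theorem exists_killsFiberNilpotents_of_isTorsionFree (A C : Type*) [CommRing A] [IsDomain A]
    [CommRing C] [Nontrivial C] [Algebra A C] [Algebra.FiniteType A C] [Module.IsTorsionFree A C] :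
    ∃ c : C, c ≠ 0 ∧ ∃ n : ℕ, KillsFiberNilpotents.{_, _, w} A c n := by
  obtain ⟨f, hf, d, φ, hφ_inj, hφ_fin⟩ := exists_injective_finite_algHom_localizationAway A C
  have : IsDomain (Localization.Away f) :=
    IsLocalization.isDomain_localization (powers_le_nonZeroDivisors_of_noZeroDivisors hf)
  obtain ⟨g, hg, n, hkill⟩ := exists_killsFiberNilpotents_of_finite_mvPolynomial φ hφ_fin
  obtain ⟨c, hc, hckill⟩ := hkill.exists_of_localizationAway hf ((map_ne_zero_iff φ hφ_inj).2 hg)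
  exact ⟨c, hc, n, hckill⟩

theorem KillsFiberNilpotents.of_algebraMap_surjective {A S C : Type*} [CommRing A] [CommRing S]
    [CommRing C] [Algebra A S] [Algebra S C] [Algebra A C] [IsScalarTower A S C]
    (hsurj : Function.Surjective (algebraMap A S)) {c : C} {n : ℕ}
    (hkill : KillsFiberNilpotents.{_, _, w} S c n) : KillsFiberNilpotents.{_, _, w} A c n := by
  intro κ _ _ x hx
  by_cases hker : RingHom.ker (algebraMap A S) ≤ RingHom.ker (algebraMap A κ)
  · algebraize [RingHom.liftOfSurjective (algebraMap A S) hsurj ⟨algebraMap A κ, hker⟩]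
    have : IsScalarTower A S κ := .of_algebraMap_eq fun a ↦
      (RingHom.liftOfRightInverse_comp_apply _ _ (Function.rightInverse_surjInv hsurj)
        ⟨algebraMap A κ, hker⟩ a).symm
    have := TensorProduct.CompatibleSMul.of_algebraMap_surjective C κ hsurj
    let e : C ⊗[A] κ ≃ₐ[C] C ⊗[S] κ := Algebra.TensorProduct.equivOfCompatibleSMul S A C C κ
    apply e.injective
    rw [map_smul, map_pow, hkill κ _ (hx.map e), map_zero]
  · obtain ⟨a, haS, haκ⟩ := SetLike.not_le_iff_exists.1 hker
    refine ((isUnit_iff_ne_zero.2 haκ).map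
      (Algebra.TensorProduct.includeRight : κ →ₐ[A] C ⊗[A] κ)).mul_right_eq_zero.1 ?_
    rw [AlgHom.commutes, IsScalarTower.algebraMap_apply A C, IsScalarTower.algebraMap_apply A S C,
      RingHom.mem_ker.1 haS, map_zero, map_zero, zero_mul]

theorem exists_killsFiberNilpotents (A C : Type*) [CommRing A] [CommRing C] [IsDomain C]
    [Algebra A C] [Algebra.FiniteType A C] :
    ∃ c : C, c ≠ 0 ∧ ∃ n : ℕ, KillsFiberNilpotents.{_, _, w} A c n := by
  let q := RingHom.ker (algebraMap A C)
  have : q.IsPrime := RingHom.ker_isPrime _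
  algebraize [RingHom.kerLift (algebraMap A C)]
  have : IsScalarTower A (A ⧸ q) C := .of_algebraMap_eq fun _ ↦ rfl
  have : FaithfulSMul (A ⧸ q) C :=
    (faithfulSMul_iff_algebraMap_injective _ _).2 (RingHom.kerLift_injective _)
  have : Algebra.FiniteType (A ⧸ q) C := .of_restrictScalars_finiteType A _ _
  obtain ⟨c, hc, n, hkill⟩ := exists_killsFiberNilpotents_of_isTorsionFree (A ⧸ q) C
  exact ⟨c, hc, n, hkill.of_algebraMap_surjective Ideal.Quotient.mk_surjective⟩

/-! ### Noetherian induction -/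

theorem mul_mem_of_mem_sup_span_singleton {R : Type*} [CommRing R] {I : Ideal R} {b y z : R}
    (hy : y ∈ I ⊔ Ideal.span {b}) (hbz : b * z ∈ I) : y * z ∈ I := by
  obtain ⟨u, hu, v, hv, rfl⟩ := Submodule.mem_sup.1 hy
  obtain ⟨w, rfl⟩ := Ideal.mem_span_singleton'.1 hv
  rw [add_mul, mul_assoc]
  exact I.add_mem (I.mul_mem_right z hu) (I.mul_mem_left w hbz)

/-- For some `n`, every element of the radical of the extension of `J` to a fiber `B ⊗[A] κ` has its
`n`-th power in that extension, uniformly in the field `κ`; equivalently, the radical indices of the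
fibers of `B ⧸ J` are bounded. Working with ideals of the fixed ring `B` instead of quotients makes
Noetherian induction direct. -/
def RadicalIndexBounded (A : Type u) {B : Type v} [CommRing A] [CommRing B] [Algebra A B]
    (J : Ideal B) : Prop :=
  ∃ n : ℕ, ∀ (κ : Type w) [Field κ] [Algebra A κ],
    ∀ x ∈ (J.map (algebraMap B (B ⊗[A] κ))).radical, x ^ n ∈ J.map (algebraMap B (B ⊗[A] κ))

section

variable {A : Type u} {B : Type v} [CommRing A] [CommRing B] [Algebra A B]

theorem RadicalIndexBounded.of_mul_pow_mem {J : Ideal B} {b : B} {r : ℕ}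
    (hsup : RadicalIndexBounded.{_, _, w} A (J ⊔ Ideal.span {b}))
    (hb : ∀ (κ : Type w) [Field κ] [Algebra A κ],
      ∀ x ∈ (J.map (algebraMap B (B ⊗[A] κ))).radical,
        algebraMap B (B ⊗[A] κ) b * x ^ r ∈ J.map (algebraMap B (B ⊗[A] κ))) :
    RadicalIndexBounded.{_, _, w} A J := by
  obtain ⟨n, hn⟩ := hsup
  refine ⟨n + r, fun κ _ _ x hx ↦ ?_⟩
  have hmem := hn κ x (Ideal.radical_mono (Ideal.map_mono le_sup_left) hx)
  rw [Ideal.map_sup, Ideal.map_span, Set.image_singleton] at hmem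
  rw [pow_add]
  exact mul_mem_of_mem_sup_span_singleton hmem (hb κ x hx)

theorem RadicalIndexBounded.of_mul_mem {J : Ideal B} {a b : B} (hab : a * b ∈ J)
    (ha : RadicalIndexBounded.{_, _, w} A (J ⊔ Ideal.span {a}))
    (hb : RadicalIndexBounded.{_, _, w} A (J ⊔ Ideal.span {b})) :
    RadicalIndexBounded.{_, _, w} A J := by
  obtain ⟨r, hr⟩ := hb
  refine ha.of_mul_pow_mem (r := r) fun κ _ _ x hx ↦ ?_
  have hmem := hr κ x (Ideal.radical_mono (Ideal.map_mono le_sup_left) hx)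
  rw [Ideal.map_sup, Ideal.map_span, Set.image_singleton] at hmem
  rw [mul_comm]
  refine mul_mem_of_mem_sup_span_singleton hmem ?_
  rw [← map_mul, mul_comm]
  exact Ideal.mem_map_of_mem _ hab

theorem ker_map_quotientMk_id (J : Ideal B) (κ : Type*) [CommRing κ] [Algebra A κ] :
    RingHom.ker (Algebra.TensorProduct.map (Ideal.Quotient.mkₐ A J) (AlgHom.id A κ)) =
      J.map (algebraMap B (B ⊗[A] κ)) := by
  have hker : RingHom.ker (Ideal.Quotient.mkₐ A J) = J := Ideal.Quotient.mkₐ_ker A J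
  rw [Algebra.TensorProduct.rTensor_ker _ (Ideal.Quotient.mkₐ_surjective A J), hker]
  rfl

theorem exists_notMem_mul_pow_mem_map [Algebra.FiniteType A B] (J : Ideal B) [J.IsPrime] :
    ∃ b ∉ J, ∃ r : ℕ, ∀ (κ : Type w) [Field κ] [Algebra A κ],
      ∀ x ∈ (J.map (algebraMap B (B ⊗[A] κ))).radical,
        algebraMap B (B ⊗[A] κ) b * x ^ r ∈ J.map (algebraMap B (B ⊗[A] κ)) := by
  obtain ⟨c, hc, r, hkill⟩ := exists_killsFiberNilpotents A (B ⧸ J)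
  obtain ⟨b, rfl⟩ := Ideal.Quotient.mk_surjective c
  refine ⟨b, mt Ideal.Quotient.eq_zero_iff_mem.2 hc, r, fun κ _ _ x hx ↦ ?_⟩
  rw [← ker_map_quotientMk_id] at hx ⊢
  let π := Algebra.TensorProduct.map (Ideal.Quotient.mkₐ A J) (AlgHom.id A κ)
  have hπx : IsNilpotent (π x) := by
    obtain ⟨m, hm⟩ := hx
    exact ⟨m, by rw [← map_pow]; exact hm⟩
  rw [RingHom.mem_ker, map_mul, map_pow, ← hkill κ (π x) hπx, Algebra.smul_def]
  rfl

theorem radicalIndexBounded [IsNoetherianRing B] [Algebra.FiniteType A B] (J : Ideal B) :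
    RadicalIndexBounded.{_, _, w} A J := by
  induction J using WellFoundedGT.induction with
  | ind J ih =>
    have hsup {b : B} (hb : b ∉ J) : RadicalIndexBounded.{_, _, w} A (J ⊔ Ideal.span {b}) :=
      ih _ (left_lt_sup.2 (by simpa using hb))
    by_cases hprime : J.IsPrime
    · obtain ⟨b, hb, r, hr⟩ := exists_notMem_mul_pow_mem_map (A := A) J
      exact (hsup hb).of_mul_pow_mem hr
    · obtain rfl | ⟨a, ha, b, hb, hab⟩ := Ideal.not_isPrime_iff.1 hprime
      · exact ⟨0, fun κ _ _ x _ ↦ by simp [Ideal.map_top]⟩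
      · exact .of_mul_mem hab (hsup ha) (hsup hb)

end

theorem exists_uniform_radical_index_bound_of_fibers_affine_general
    (A : Type u) (B : Type v) [CommRing A] [CommRing B] [Algebra A B]
    [IsNoetherianRing B] [Algebra.FiniteType A B] :
    ∃ n : ℕ, 0 < n ∧ ∀ (κ : Type w) [Field κ] [Algebra A κ] (x : B ⊗[A] κ),
      IsNilpotent x → x ^ n = 0 := by
  obtain ⟨n, hn⟩ := radicalIndexBounded (A := A) (⊥ : Ideal B)
  simp only [Ideal.map_bot, Ideal.mem_bot] at hn
  exact ⟨n + 1, n.succ_pos, fun κ _ _ x hx ↦ pow_eq_zero_of_le n.le_succ (hn κ x hx)⟩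

/-- Proposition 4.2 of the paper.  Let `k` be an algebraically closed field
and `A → B` a homomorphism of finitely generated commutative `k`-algebras, corresponding to a
morphism `Spec B → Spec A` of finite type affine `k`-schemes.  Then there is a positive integer
`n` such that for every prime ideal `p ⊆ A`, every nilpotent element of the fiber ring
`B ⊗_A κ(p)` has `n`-th power zero, where `κ(p) = Frac(A ⧸ p)` is the residue field at `p`:
the radical index of every fiber is at most `n`. -/
theorem exists_uniform_radical_index_bound_of_fibers_affine
    (k : Type*) [Field k] [IsAlgClosed k]
    (A B : Type*) [CommRing A] [CommRing B] [Algebra k A] [Algebra k B]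
    [Algebra A B] [IsScalarTower k A B]
    (hA : Algebra.FiniteType k A) (hB : Algebra.FiniteType k B) :
    ∃ n : ℕ, 0 < n ∧ ∀ (p : Ideal A), p.IsPrime →
      ∀ x : B ⊗[A] FractionRing (A ⧸ p), IsNilpotent x → x ^ n = 0 := by
  have : IsNoetherianRing B := Algebra.FiniteType.isNoetherianRing k B
  have : Algebra.FiniteType A B := .of_restrictScalars_finiteType k A B
  obtain ⟨n, hn, hpow⟩ := exists_uniform_radical_index_bound_of_fibers_affine_general A B
  exact ⟨n, hn, fun p _ ↦ hpow (FractionRing (A ⧸ p))⟩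
end

section
/- Let k be an algebraically closed field and let f : Y → X be a morphism of finite type k-schemes. Then there exists a positive integer n such that for every closed point x of X, the radical index of the scheme-theoretic fiber Y_x = Y ×_X Spec κ(x) is at most n; that is, for every open subset U of Y_x and every section g ∈ O_{Y_x}(U) whose germs are nilpotent, one has g^n = 0 in O_{Y_x}(U). -/
open AlgebraicGeometry CategoryTheory CategoryTheory.Limits

namespace AlgebraicGeometry

/-- The radical index of a scheme `T` is at most `n` : for every open `U ⊆ T` and every
section `g ∈ O_T(U)` all of whose germs are nilpotent (i.e. `g` lies in the nilradical
sheaf), one has `g ^ n = 0`. -/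
def Scheme.radicalIndexLE (T : Scheme) (n : ℕ) : Prop :=
  ∀ (U : T.Opens) (g : T.presheaf.obj (Opposite.op U)),
    (∀ (y : T) (hy : y ∈ U), IsNilpotent (T.presheaf.germ U y hy g)) → g ^ n = 0

end AlgebraicGeometry

/-!
By Noetherian induction on closed subschemes of an affine chart `Spec B ⟶ Spec A`, it suffices to
bound the fibers over a nonempty open subset of `Spec A` when `B` is a domain containing `A`. Choose
a transcendence basis `σ` of `B` over `A`; for some nonzero `h ∈ A[σ]`, the localization of `B` at
`h` is finite free over `A[σ]_h`. On a fiber `B ⊗[A] K` where some coefficient of `h` survives, this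
localization is finite free over the domain `K[σ]_h`, so by Cayley–Hamilton its rank bounds the
order of nilpotency. The bound descends to `B ⊗[A] K` itself as soon as `h` is a nonzerodivisor
there, which generic freeness of `B ⧸ (h)` over `A` ensures over a nonempty open subset of `Spec A`.
-/

open TensorProduct

universe u w

/-- Every nilpotent element of the commutative ring `R` has vanishing `n`-th power: the affine
counterpart of `Scheme.radicalIndexLE`. -/
def HasRadicalIndexLE (R : Type*) [CommRing R] (n : ℕ) : Prop :=
  ∀ g : R, IsNilpotent g → g ^ n = 0

namespace HasRadicalIndexLE

variable {R S : Type*} [CommRing R] [CommRing S]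

lemma mono {m n : ℕ} (h : HasRadicalIndexLE R m) (hmn : m ≤ n) : HasRadicalIndexLE R n :=
  fun g hg ↦ pow_eq_zero_of_le hmn (h g hg)

lemma of_subsingleton [Subsingleton R] (n : ℕ) : HasRadicalIndexLE R n :=
  fun _ _ ↦ Subsingleton.elim _ _

lemma of_injective {n : ℕ} (h : HasRadicalIndexLE S n) {φ : R →+* S}
    (hφ : Function.Injective φ) : HasRadicalIndexLE R n := fun g hg ↦
  hφ <| by rw [map_pow, h _ (hg.map φ), map_zero]

lemma of_ker_mul_ker_eq_bot {S' : Type*} [CommRing S'] {φ : R →+* S} {φ' : R →+* S'}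
    (hker : RingHom.ker φ * RingHom.ker φ' = ⊥) {n n' : ℕ} (h : HasRadicalIndexLE S n)
    (h' : HasRadicalIndexLE S' n') : HasRadicalIndexLE R (n + n') := fun g hg ↦ by
  have hφ : g ^ n ∈ RingHom.ker φ := by rw [RingHom.mem_ker, map_pow, h _ (hg.map φ)]
  have hφ' : g ^ n' ∈ RingHom.ker φ' := by rw [RingHom.mem_ker, map_pow, h' _ (hg.map φ')]
  have hmul := Ideal.mul_mem_mul hφ hφ'
  rwa [hker, ← pow_add, Ideal.mem_bot] at hmul

-- The characteristic polynomial of multiplication by a nilpotent element is a power of `X`.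
lemma of_free [IsDomain R] [Algebra R S] [Module.Free R S] [Module.Finite R S] :
    HasRadicalIndexLE S (Module.finrank R S) := fun g hg ↦ by
  have hcharpoly := (Algebra.lmul R S g).isNilpotent_iff_charpoly.mp (hg.map (Algebra.lmul R S))
  have hpow := (Algebra.lmul R S g).aeval_self_charpoly
  rw [hcharpoly, map_pow, Polynomial.aeval_X, ← map_pow] at hpow
  exact Algebra.lmul_injective (R := R) (by rw [hpow, map_zero])

lemma of_isLocalization [Algebra R S] (M : Submonoid R) [IsLocalization M S] {n : ℕ}
    (h : HasRadicalIndexLE R n) : HasRadicalIndexLE S n := fun g ⟨e, hge⟩ ↦ by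
  obtain ⟨r, s, rfl⟩ := IsLocalization.exists_mk'_eq M g
  rw [← IsLocalization.mk'_pow, IsLocalization.mk'_eq_zero_iff] at hge
  obtain ⟨t, ht⟩ := hge
  have hnil : IsNilpotent (t * r) := ⟨e + 1, by linear_combination (t ^ e * r : R) * ht⟩
  rw [← IsLocalization.mk'_pow, IsLocalization.mk'_eq_zero_iff]
  exact ⟨t ^ n, by rw [SubmonoidClass.coe_pow, ← mul_pow, h _ hnil]⟩

end HasRadicalIndexLE

section GenericFreeness

variable {σ A B : Type*} [CommRing A] [CommRing B] [Algebra A B]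

/-- The exponents of the leading monomials of the nonzero elements of an ideal, with leading
coefficients ignored even where they are not units. After inverting a single scalar, the remaining
monomials form a basis of the quotient by the ideal. -/
def leadingExponents (m : MonomialOrder σ) (I : Ideal (MvPolynomial σ A)) : Set (σ →₀ ℕ) :=
  {c | ∃ p ∈ I, p ≠ 0 ∧ m.degree p = c}

lemma linearIndependent_monomial_notMem_leadingExponents (m : MonomialOrder σ)
    (φ : MvPolynomial σ A →ₐ[A] B) :
    LinearIndependent A fun c : ↥(leadingExponents m (RingHom.ker φ))ᶜ ↦
      φ (MvPolynomial.monomial c.1 1) := by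
  have hmonomial := (MvPolynomial.basisMonomials σ A).linearIndependent.comp
    (Subtype.val : ↥(leadingExponents m (RingHom.ker φ))ᶜ → σ →₀ ℕ) Subtype.val_injective
  refine hmonomial.map (f := φ.toLinearMap) (Submodule.disjoint_def.mpr fun p hp hpker ↦ ?_)
  by_contra hp0
  have hsupp : p ∈ MvPolynomial.restrictSupport A (leadingExponents m (RingHom.ker φ))ᶜ := by
    rw [MvPolynomial.restrictSupport_eq_span]
    simpa only [Function.comp_def, MvPolynomial.coe_basisMonomials, Set.image_eq_range] using hp
  exact (MvPolynomial.mem_restrictSupport_iff A).mp hsupp (m.degree_mem_support hp0)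
    ⟨p, hpker, hp0, rfl⟩

variable (A' : Type*) [CommRing A'] [Algebra A A']

lemma tmul_apply_monomial (φ : MvPolynomial σ A →ₐ[A] B) (c : σ →₀ ℕ) (r : A) :
    (1 : A') ⊗ₜ[A] φ (MvPolynomial.monomial c r) =
      algebraMap A A' r • (1 : A') ⊗ₜ[A] φ (MvPolynomial.monomial c 1) := by
  rw [algebraMap_smul, ← TensorProduct.tmul_smul, ← map_smul, MvPolynomial.smul_monomial,
    smul_eq_mul, mul_one]

-- Division by `b`: the leading monomial of `X ^ (c - m.degree b) * b` is rewritten modulo `ker φ`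
-- as a combination of smaller monomials.
lemma tmul_apply_monomial_mem_span (m : MonomialOrder σ) (φ : MvPolynomial σ A →ₐ[A] B)
    (S : Set (σ →₀ ℕ))
    (hS : ∀ c ∉ S, ∃ b ∈ RingHom.ker φ, b ≠ 0 ∧ m.degree b ≤ c ∧
      IsUnit (algebraMap A A' (m.leadingCoeff b))) (c : σ →₀ ℕ) :
    (1 : A') ⊗ₜ[A] φ (MvPolynomial.monomial c 1) ∈
      Submodule.span A' (Set.range fun d : S ↦ (1 : A') ⊗ₜ[A] φ (MvPolynomial.monomial d.1 1)) := by
  classical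
  induction hc : m.toSyn c using WellFoundedLT.induction generalizing c with
  | ind _ ih =>
  subst hc
  by_cases hcS : c ∈ S
  · exact Submodule.subset_span ⟨⟨c, hcS⟩, rfl⟩
  obtain ⟨b, hb, hb0, hbc, hunit⟩ := hS c hcS
  have hrel : ∑ d ∈ b.support, algebraMap A A' (b.coeff d) •
      (1 : A') ⊗ₜ[A] φ (MvPolynomial.monomial (c - m.degree b + d) 1) = 0 := by
    have hφ : φ (MvPolynomial.monomial (c - m.degree b) 1 * b) = 0 := by
      rw [map_mul, RingHom.mem_ker.mp hb, mul_zero]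
    nth_rw 2 [b.as_sum] at hφ
    simp only [← tmul_apply_monomial, ← TensorProduct.tmul_sum, ← map_sum]
    simp only [Finset.mul_sum, MvPolynomial.monomial_mul, one_mul] at hφ
    rw [hφ, TensorProduct.tmul_zero]
  rw [← Finset.add_sum_erase _ _ (m.degree_mem_support hb0), tsub_add_cancel_of_le hbc] at hrel
  rw [← Submodule.smul_mem_iff_of_isUnit _ hunit, MonomialOrder.leadingCoeff,
    eq_neg_of_add_eq_zero_left hrel]
  refine Submodule.neg_mem _ <| Submodule.sum_mem _ fun d hd ↦ Submodule.smul_mem _ _ <|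
    ih _ ?_ _ rfl
  have hlt : m.toSyn d < m.toSyn (m.degree b) := by
    obtain ⟨hne, hsupp⟩ := Finset.mem_erase.mp hd
    exact lt_of_le_of_ne (m.le_degree hsupp) (m.toSyn.injective.ne hne)
  simpa [← map_add, tsub_add_cancel_of_le hbc] using add_lt_add_right hlt (m.toSyn (c - m.degree b))

lemma span_tmul_apply_monomial_eq_top (m : MonomialOrder σ) {φ : MvPolynomial σ A →ₐ[A] B}
    (hφ : Function.Surjective φ) (S : Set (σ →₀ ℕ))
    (hS : ∀ c ∉ S, ∃ b ∈ RingHom.ker φ, b ≠ 0 ∧ m.degree b ≤ c ∧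
      IsUnit (algebraMap A A' (m.leadingCoeff b))) :
    Submodule.span A' (Set.range fun d : S ↦
      (1 : A') ⊗ₜ[A] φ (MvPolynomial.monomial d.1 1)) = ⊤ := by
  have hB : Submodule.span A (Set.range fun c ↦ φ (MvPolynomial.monomial c 1)) = ⊤ := by
    rw [← LinearMap.range_eq_top (f := φ.toLinearMap).mpr hφ, LinearMap.range_eq_map,
      ← (MvPolynomial.basisMonomials σ A).span_eq, Submodule.map_span, ← Set.range_comp]
    rfl
  rw [eq_top_iff, ← Submodule.baseChange_top, ← hB, Submodule.baseChange_span, Submodule.span_le]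
  rintro _ ⟨_, ⟨c, rfl⟩, rfl⟩
  exact tmul_apply_monomial_mem_span A' m φ S hS c

lemma exists_forall_leadingCoeff_dvd [Finite σ] [IsDomain A] (m : MonomialOrder σ)
    (I : Ideal (MvPolynomial σ A)) :
    ∃ a ≠ 0, ∀ c ∈ leadingExponents m I,
      ∃ b ∈ I, b ≠ 0 ∧ m.degree b ≤ c ∧ m.leadingCoeff b ∣ a := by
  let minimals := {c | Minimal (· ∈ leadingExponents m I) c}
  have hfinite : minimals.Finite :=
    WellQuasiOrderedLE.finite_of_isAntichain (setOfPred_minimal_antichain _)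
  have := hfinite.fintype
  choose b hbI hb0 hdeg using fun c : minimals ↦ c.2.1
  refine ⟨∏ c, m.leadingCoeff (b c), Finset.prod_ne_zero_iff.mpr fun c _ ↦
    m.leadingCoeff_ne_zero_iff.mpr (hb0 c), fun c hc ↦ ?_⟩
  obtain ⟨d, hdc, hd⟩ := exists_minimal_le_of_wellFoundedLT (· ∈ leadingExponents m I) c hc
  exact ⟨b ⟨d, hd⟩, hbI _, hb0 _, (hdeg ⟨d, hd⟩).trans_le hdc,
    Finset.dvd_prod_of_mem _ (Finset.mem_univ _)⟩

theorem exists_free_away_tensorProduct (A B : Type*) [CommRing A] [IsDomain A] [CommRing B]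
    [Algebra A B] [Algebra.FiniteType A B] :
    ∃ a : A, a ≠ 0 ∧ Module.Free (Localization.Away a) (Localization.Away a ⊗[A] B) := by
  obtain ⟨n, φ, hφ⟩ := Algebra.FiniteType.iff_quotient_mvPolynomial''.mp ‹Algebra.FiniteType A B›
  let m : MonomialOrder (Fin n) := MonomialOrder.lex
  obtain ⟨a, ha, hdvd⟩ := exists_forall_leadingCoeff_dvd m (RingHom.ker φ)
  have hindep := (linearIndependent_monomial_notMem_leadingExponents m φ).of_isLocalizedModule
    (Localization.Away a) (Submonoid.powers a) (TensorProduct.mk A (Localization.Away a) B 1)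
  have hspan := span_tmul_apply_monomial_eq_top (Localization.Away a) m hφ
    (leadingExponents m (RingHom.ker φ))ᶜ fun c hc ↦ by
      obtain ⟨b, hb, hb0, hbc, hba⟩ := hdvd c (not_not.mp hc)
      exact ⟨b, hb, hb0, hbc, isUnit_of_dvd_unit (map_dvd _ hba)
        (IsLocalization.Away.algebraMap_isUnit a)⟩
  exact ⟨a, ha, .of_basis (.mk hindep hspan.ge)⟩

end GenericFreeness

section GenericRegularity

lemma lTensor_injective_of_exact_of_flat_baseChange {A M N Q : Type*} [CommRing A]
    [AddCommGroup M] [AddCommGroup N] [AddCommGroup Q] [Module A M] [Module A N] [Module A Q]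
    (L : Type*) [CommRing L] [Algebra A L] [Module.Flat A L] [Module.Flat L (L ⊗[A] Q)]
    {f : M →ₗ[A] N} {g : N →ₗ[A] Q} (hf : Function.Injective f) (hg : Function.Surjective g)
    (hfg : Function.Exact f g) (K : Type*) [AddCommGroup K] [Module A K] [Module L K]
    [IsScalarTower A L K] : Function.Injective (f.lTensor K) := by
  have hbaseChange : Function.Injective ((f.baseChange L).lTensor K) :=
    LinearMap.lTensor_injective_of_exact_of_flat (g.baseChange L)
      (LinearMap.lTensor_surjective L hg) (f.baseChange L)
      (Module.Flat.lTensor_preserves_injective_linearMap f hf) (lTensor_exact L hfg hg) K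
  let eM := TensorProduct.AlgebraTensorModule.cancelBaseChange A L L K M
  let eN := TensorProduct.AlgebraTensorModule.cancelBaseChange A L L K N
  have hcomm : ∀ x, f.lTensor K x = eN ((f.baseChange L).lTensor K (eM.symm x)) := fun x ↦ by
    induction x with
    | zero => simp
    | add x y hx hy => simp only [map_add, hx, hy]
    | tmul x y => simp [eM, eN]
  rw [funext hcomm]
  exact eN.injective.comp (hbaseChange.comp eM.symm.injective)

variable {A B : Type*} [CommRing A] [CommRing B] [Algebra A B]

lemma tmul_one_mem_nonZeroDivisors_of_flat_baseChange {b : B} (hb : b ∈ nonZeroDivisors B)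
    (L : Type*) [CommRing L] [Algebra A L] [Module.Flat A L]
    [Module.Flat L (L ⊗[A] (B ⧸ Ideal.span {b}))] (K : Type*) [CommRing K] [Algebra A K]
    [Algebra L K] [IsScalarTower A L K] : b ⊗ₜ[A] (1 : K) ∈ nonZeroDivisors (B ⊗[A] K) := by
  have hinj : Function.Injective (LinearMap.mulLeft A b) := fun x y hxy ↦
    (mul_cancel_left_mem_nonZeroDivisors hb).mp hxy
  have hexact : Function.Exact (LinearMap.mulLeft A b)
      (Ideal.Quotient.mkₐ A (Ideal.span {b})).toLinearMap := fun x ↦ by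
    rw [AlgHom.toLinearMap_apply, Ideal.Quotient.mkₐ_eq_mk, Ideal.Quotient.eq_zero_iff_dvd]
    exact exists_congr fun _ ↦ eq_comm
  have hrTensor := (LinearMap.lTensor_inj_iff_rTensor_inj K _).mp <|
    lTensor_injective_of_exact_of_flat_baseChange L hinj Ideal.Quotient.mk_surjective hexact K
  have hmul : (LinearMap.mulLeft A b).rTensor K = LinearMap.mulLeft A (b ⊗ₜ[A] (1 : K)) :=
    TensorProduct.ext' fun x y ↦ by simp
  rw [hmul] at hrTensor
  exact mem_nonZeroDivisors_iff_left.mpr fun x hx ↦ hrTensor (by simpa using hx)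

lemma exists_forall_tmul_one_mem_nonZeroDivisors (A : Type*) {B : Type*} [CommRing A] [IsDomain A]
    [CommRing B] [Algebra A B] [Algebra.FiniteType A B] {b : B} (hb : b ∈ nonZeroDivisors B) :
    ∃ a : A, a ≠ 0 ∧ ∀ (K : Type w) [CommRing K] [Algebra A K], IsUnit (algebraMap A K a) →
      b ⊗ₜ[A] (1 : K) ∈ nonZeroDivisors (B ⊗[A] K) := by
  obtain ⟨a, ha, hfree⟩ := exists_free_away_tensorProduct A (B ⧸ Ideal.span {b})
  refine ⟨a, ha, fun K _ _ hunit ↦ ?_⟩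
  let lift : Localization.Away a →+* K := IsLocalization.Away.lift a hunit
  let := lift.toAlgebra
  have : IsScalarTower A (Localization.Away a) K :=
    .of_algebraMap_eq fun x ↦ (IsLocalization.Away.lift_eq a hunit x).symm
  exact tmul_one_mem_nonZeroDivisors_of_flat_baseChange hb (Localization.Away a) K

end GenericRegularity

section GenericallyFinite

lemma rank_tensorProduct_lt_aleph0_iff_of_isLocalization {P : Type*} [CommRing P] {M : Submonoid P}
    (hM : M ≤ nonZeroDivisors P) (L : Type*) [CommRing L] [Algebra P L] [IsLocalization M L]
    (N : Type*) [AddCommGroup N] [Module P N] :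
    Module.rank L (L ⊗[P] N) < Cardinal.aleph0 ↔ Module.rank P N < Cardinal.aleph0 := by
  rw [IsLocalization.rank_eq L M hM, ← Cardinal.lift_lt_aleph0,
    IsLocalizedModule.lift_rank_eq M (TensorProduct.mk P L N 1) hM, Cardinal.lift_lt_aleph0]

lemma exists_free_finite_away_tensorProduct (P B : Type*) [CommRing P] [IsDomain P] [CommRing B]
    [Algebra P B] [Algebra.FiniteType P B] [Algebra.IsAlgebraic P B] :
    ∃ h : P, h ≠ 0 ∧ Module.Free (Localization.Away h) (Localization.Away h ⊗[P] B) ∧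
      Module.Finite (Localization.Away h) (Localization.Away h ⊗[P] B) := by
  obtain ⟨h, hh, hfree⟩ := exists_free_away_tensorProduct P B
  refine ⟨h, hh, hfree, ?_⟩
  have hpowers : Submonoid.powers h ≤ nonZeroDivisors P :=
    powers_le_nonZeroDivisors_of_noZeroDivisors hh
  have : IsDomain (Localization.Away h) := IsLocalization.isDomain_localization hpowers
  have hfinite : Module.Finite (FractionRing P) (FractionRing P ⊗[P] B) :=
    Algebra.IsIntegral.finite
  rwa [← Module.rank_lt_aleph0_iff, rank_tensorProduct_lt_aleph0_iff_of_isLocalization hpowers,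
    ← rank_tensorProduct_lt_aleph0_iff_of_isLocalization le_rfl (FractionRing P),
    Module.rank_lt_aleph0_iff]

end GenericallyFinite

section FreeFibers

variable {A P : Type*} [CommRing A] [CommRing P] [Algebra A P]

lemma hasRadicalIndexLE_tensorProduct_of_free (S C K : Type*) [CommRing S] [CommRing C]
    [CommRing K] [Algebra A S] [Algebra S C] [Algebra A C] [IsScalarTower A S C] [Algebra A K]
    [Module.Free S C] [Module.Finite S C] [IsDomain (S ⊗[A] K)] :
    HasRadicalIndexLE (C ⊗[A] K) (Module.finrank S C) := by
  have : Nontrivial S := (Algebra.TensorProduct.includeLeft : S →ₐ[A] S ⊗[A] K).domain_nontrivial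
  have hfree : HasRadicalIndexLE ((S ⊗[A] K) ⊗[S] C) (Module.finrank S C) :=
    Module.finrank_baseChange (R := S ⊗[A] K) (S := S) (M' := C) ▸ .of_free
  let e : C ⊗[A] K ≃ₐ[S] (S ⊗[A] K) ⊗[S] C :=
    (Algebra.TensorProduct.cancelBaseChange A S S C K).symm.trans (Algebra.TensorProduct.comm ..)
  exact hfree.of_injective (φ := e) e.injective

lemma isDomain_tensorProduct_of_isLocalization (M : Submonoid P) (S K : Type*) [CommRing S]
    [Algebra P S] [IsLocalization M S] [Algebra A S] [IsScalarTower A P S] [CommRing K]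
    [Algebra A K] [IsDomain (P ⊗[A] K)]
    (hM : Algebra.algebraMapSubmonoid (P ⊗[A] K) M ≤ nonZeroDivisors (P ⊗[A] K)) :
    IsDomain (S ⊗[A] K) := by
  have : IsDomain ((P ⊗[A] K) ⊗[P] S) := IsLocalization.isDomain_of_le_nonZeroDivisors _ hM
  exact ((Algebra.TensorProduct.cancelBaseChange A P P S K).symm.trans
    (Algebra.TensorProduct.comm ..)).toMulEquiv.isDomain _

end FreeFibers

section PolynomialFibers

variable {σ A : Type*} [CommRing A] (K : Type*) [CommRing K] [Algebra A K]

instance isDomain_mvPolynomial_tensorProduct [IsDomain K] :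
    IsDomain (MvPolynomial σ A ⊗[A] K) :=
  ((Algebra.TensorProduct.comm A (MvPolynomial σ A) K).toMulEquiv.trans
    (MvPolynomial.algebraTensorAlgEquiv A K).toMulEquiv).isDomain _

lemma mvPolynomial_tmul_one_ne_zero {p : MvPolynomial σ A} {c : σ →₀ ℕ}
    (hc : algebraMap A K (p.coeff c) ≠ 0) : p ⊗ₜ[A] (1 : K) ≠ 0 := fun hp ↦ hc <| by
  have hmap := congrArg (MvPolynomial.algebraTensorAlgEquiv A K ∘ TensorProduct.comm A _ K) hp
  simpa [MvPolynomial.coeff_map] using congrArg (MvPolynomial.coeff c) hmap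

lemma isDomain_away_mvPolynomial_tensorProduct [IsDomain K] {h : MvPolynomial σ A} {c : σ →₀ ℕ}
    (hc : algebraMap A K (h.coeff c) ≠ 0) : IsDomain (Localization.Away h ⊗[A] K) := by
  refine isDomain_tensorProduct_of_isLocalization (Submonoid.powers h) _ K ?_
  rw [Algebra.algebraMapSubmonoid_powers]
  exact powers_le_nonZeroDivisors_of_noZeroDivisors (mvPolynomial_tmul_one_ne_zero K hc)

end PolynomialFibers

section GenericFibers

lemma hasRadicalIndexLE_tensorProduct_of_free_localization {A P B : Type*} [CommRing A] [CommRing P]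
    [CommRing B] [Algebra A P] [Algebra P B] [Algebra A B] [IsScalarTower A P B] (M : Submonoid P)
    (S : Type*) [CommRing S] [Algebra P S] [IsLocalization M S] [Algebra A S] [IsScalarTower A P S]
    [Module.Free S (S ⊗[P] B)] [Module.Finite S (S ⊗[P] B)]
    (K : Type*) [CommRing K] [Algebra A K] [IsDomain (S ⊗[A] K)]
    (hM : Algebra.algebraMapSubmonoid (B ⊗[A] K) M ≤ nonZeroDivisors (B ⊗[A] K)) :
    HasRadicalIndexLE (B ⊗[A] K) (Module.finrank S (S ⊗[P] B)) := by
  have hfree := hasRadicalIndexLE_tensorProduct_of_free (A := A) S (S ⊗[P] B) K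
  let e : (B ⊗[A] K) ⊗[P] S ≃ₐ[P] (S ⊗[P] B) ⊗[A] K :=
    (Algebra.TensorProduct.comm ..).trans (Algebra.TensorProduct.assoc A P P S B K).symm
  exact (hfree.of_injective (φ := e.toRingHom) e.injective).of_injective
    (IsLocalization.injective ((B ⊗[A] K) ⊗[P] S) hM)

lemma exists_forall_hasRadicalIndexLE_tensorProduct_of_isAlgebraic_mvPolynomial
    {σ A B : Type*} [CommRing A] [IsDomain A] [CommRing B] [IsDomain B]
    [Algebra A B] [Algebra.FiniteType A B] [Algebra (MvPolynomial σ A) B]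
    [IsScalarTower A (MvPolynomial σ A) B] [FaithfulSMul (MvPolynomial σ A) B]
    [Algebra.IsAlgebraic (MvPolynomial σ A) B] :
    ∃ a : A, a ≠ 0 ∧ ∃ n : ℕ, ∀ (K : Type w) [Field K] [Algebra A K],
      algebraMap A K a ≠ 0 → HasRadicalIndexLE (B ⊗[A] K) n := by
  have : Algebra.FiniteType (MvPolynomial σ A) B := .of_restrictScalars_finiteType A _ B
  obtain ⟨h, hh, _, _⟩ := exists_free_finite_away_tensorProduct (MvPolynomial σ A) B
  have hhB : algebraMap _ B h ∈ nonZeroDivisors B := mem_nonZeroDivisors_of_ne_zero <| by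
    rwa [Ne, FaithfulSMul.algebraMap_eq_zero_iff]
  obtain ⟨a, ha, hreg⟩ := exists_forall_tmul_one_mem_nonZeroDivisors.{w, _, _} A hhB
  obtain ⟨c, hc⟩ := MvPolynomial.ne_zero_iff.mp hh
  refine ⟨a * h.coeff c, mul_ne_zero ha hc,
    Module.finrank (Localization.Away h) (Localization.Away h ⊗[MvPolynomial σ A] B),
    fun K _ _ haK ↦ ?_⟩
  rw [map_mul] at haK
  have := isDomain_away_mvPolynomial_tensorProduct K (right_ne_zero_of_mul haK)
  refine hasRadicalIndexLE_tensorProduct_of_free_localization (Submonoid.powers h) _ K ?_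
  rw [Algebra.algebraMapSubmonoid_powers]
  exact Submonoid.powers_le.mpr (hreg K (left_ne_zero_of_mul haK).isUnit)

lemma exists_forall_hasRadicalIndexLE_tensorProduct_of_faithfulSMul (A B : Type*) [CommRing A]
    [CommRing B] [IsDomain B] [Algebra A B] [Algebra.FiniteType A B] [FaithfulSMul A B] :
    ∃ a : A, a ≠ 0 ∧ ∃ n : ℕ, ∀ (K : Type w) [Field K] [Algebra A K],
      algebraMap A K a ≠ 0 → HasRadicalIndexLE (B ⊗[A] K) n := by
  have : IsDomain A := (FaithfulSMul.algebraMap_injective A B).isDomain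
  obtain ⟨s, hs⟩ := exists_isTranscendenceBasis A B
  let := (MvPolynomial.aeval (R := A) ((↑) : s → B)).toAlgebra
  have : IsScalarTower A (MvPolynomial s A) B :=
    .of_algebraMap_eq fun x ↦ (AlgHom.commutes (MvPolynomial.aeval ((↑) : s → B)) x).symm
  have : FaithfulSMul (MvPolynomial s A) B :=
    (faithfulSMul_iff_algebraMap_injective _ _).mpr hs.1
  have := hs.isAlgebraic
  have : Algebra.IsAlgebraic (MvPolynomial s A) B :=
    .of_ringHom_of_comp_eq (S := Algebra.adjoin A (Set.range ((↑) : s → B)))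
      hs.1.aevalEquiv (RingHom.id B) hs.1.aevalEquiv.surjective Function.injective_id (by
        ext <;> simp [RingHom.algebraMap_toAlgebra])
  exact exists_forall_hasRadicalIndexLE_tensorProduct_of_isAlgebraic_mvPolynomial (σ := s)

lemma subsingleton_tensorProduct_of_algebraMap_eq_zero {A B K : Type*} [CommRing A] [CommRing B]
    [Algebra A B] [Field K] [Algebra A K] {a : A} (haB : algebraMap A B a = 0)
    (haK : algebraMap A K a ≠ 0) : Subsingleton (B ⊗[A] K) := by
  refine subsingleton_of_zero_eq_one ?_
  have hone : algebraMap A B a ⊗ₜ[A] (algebraMap A K a)⁻¹ = 1 := by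
    rw [Algebra.algebraMap_eq_smul_one, TensorProduct.smul_tmul, Algebra.smul_def,
      mul_inv_cancel₀ haK, Algebra.TensorProduct.one_def]
  rw [← hone, haB, TensorProduct.zero_tmul]

lemma exists_forall_hasRadicalIndexLE_tensorProduct_of_isDomain (A B : Type*) [CommRing A]
    [CommRing B] [IsDomain B] [Algebra A B] [Algebra.FiniteType A B] :
    ∃ a : A, algebraMap A B a ≠ 0 ∧ ∃ n : ℕ, ∀ (K : Type w) [Field K] [Algebra A K],
      algebraMap A K a ≠ 0 → HasRadicalIndexLE (B ⊗[A] K) n := by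
  let A' := A ⧸ RingHom.ker (algebraMap A B)
  let : Algebra A' B := (RingHom.kerLift (algebraMap A B)).toAlgebra
  have : IsScalarTower A A' B := .of_algebraMap_eq fun _ ↦ rfl
  have : FaithfulSMul A' B :=
    (faithfulSMul_iff_algebraMap_injective _ _).mpr (RingHom.kerLift_injective _)
  have : Algebra.FiniteType A' B := .of_restrictScalars_finiteType A _ B
  obtain ⟨a', ha', n, hn⟩ :=
    exists_forall_hasRadicalIndexLE_tensorProduct_of_faithfulSMul.{w, _, _} A' B
  obtain ⟨a, rfl⟩ := Ideal.Quotient.mk_surjective a'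
  refine ⟨a, fun ha ↦ ha' (Ideal.Quotient.eq_zero_iff_mem.mpr ha), n, fun K _ _ haK ↦ ?_⟩
  by_cases! hker : ∃ z ∈ RingHom.ker (algebraMap A B), algebraMap A K z ≠ 0
  · obtain ⟨z, hzB, hzK⟩ := hker
    have := subsingleton_tensorProduct_of_algebraMap_eq_zero hzB hzK
    exact .of_subsingleton n
  · let : Algebra A' K := (Ideal.Quotient.lift _ (algebraMap A K) hker).toAlgebra
    have : IsScalarTower A A' K := .of_algebraMap_eq fun _ ↦ rfl
    have : TensorProduct.CompatibleSMul A A' B K :=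
      .of_algebraMap_surjective _ _ Ideal.Quotient.mk_surjective
    let e : B ⊗[A] K ≃ₐ[A'] B ⊗[A'] K :=
      (Algebra.TensorProduct.equivOfCompatibleSMul A A' A' B K).symm
    exact (hn K haK).of_injective (φ := e) e.injective

end GenericFibers

section NoetherianInduction

variable {A B : Type*} [CommRing A] [CommRing B] [Algebra A B]
  (K : Type*) [CommRing K] [Algebra A K]

lemma ker_tensorProduct_map_factorₐ_id {I J : Ideal B} (hIJ : I ≤ J) :
    RingHom.ker (Algebra.TensorProduct.map (Ideal.Quotient.factorₐ A hIJ) (AlgHom.id A K)) =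
      (J.map (Ideal.Quotient.mk I)).map
        (Algebra.TensorProduct.includeLeft : B ⧸ I →ₐ[A] (B ⧸ I) ⊗[A] K) := by
  rw [Algebra.TensorProduct.rTensor_ker _ (Ideal.Quotient.factor_surjective hIJ)]
  congr 1
  exact Ideal.Quotient.factor_ker hIJ

lemma hasRadicalIndexLE_quotient_tensorProduct_of_mul_le {I J J' : Ideal B} (hJ : I ≤ J)
    (hJ' : I ≤ J') (hmul : J * J' ≤ I) {n n' : ℕ} (h : HasRadicalIndexLE ((B ⧸ J) ⊗[A] K) n)
    (h' : HasRadicalIndexLE ((B ⧸ J') ⊗[A] K) n') :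
    HasRadicalIndexLE ((B ⧸ I) ⊗[A] K) (n + n') := by
  refine .of_ker_mul_ker_eq_bot (φ := (Algebra.TensorProduct.map (Ideal.Quotient.factorₐ A hJ)
    (AlgHom.id A K)).toRingHom) (φ' := (Algebra.TensorProduct.map (Ideal.Quotient.factorₐ A hJ')
    (AlgHom.id A K)).toRingHom) ?_ h h'
  have hbot : (J * J').map (Ideal.Quotient.mk I) = ⊥ := by
    rwa [Ideal.map_eq_bot_iff_le_ker, Ideal.mk_ker]
  refine (congrArg₂ (· * ·) (ker_tensorProduct_map_factorₐ_id K hJ)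
    (ker_tensorProduct_map_factorₐ_id K hJ')).trans ?_
  rw [← Ideal.map_mul, ← Ideal.map_mul, hbot, Ideal.map_bot]

lemma hasRadicalIndexLE_quotient_tensorProduct_of_algebraMap_eq_zero {I : Ideal B} {a : A}
    (ha : algebraMap A K a = 0) {n : ℕ}
    (h : HasRadicalIndexLE ((B ⧸ (I ⊔ Ideal.span {algebraMap A B a})) ⊗[A] K) n) :
    HasRadicalIndexLE ((B ⧸ I) ⊗[A] K) n := by
  refine h.of_injective (φ := (Algebra.TensorProduct.map (Ideal.Quotient.factorₐ A le_sup_left)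
    (AlgHom.id A K)).toRingHom) <| (RingHom.injective_iff_ker_eq_bot _).mpr <|
      (ker_tensorProduct_map_factorₐ_id K le_sup_left).trans ?_
  rw [Ideal.map_sup, Ideal.map_quotient_self, bot_sup_eq, Ideal.map_span, Set.image_singleton,
    Ideal.map_span, Set.image_singleton, Ideal.span_singleton_eq_bot]
  change algebraMap A (B ⧸ I) a ⊗ₜ[A] (1 : K) = 0
  rw [Algebra.algebraMap_eq_smul_one, TensorProduct.smul_tmul, ← Algebra.algebraMap_eq_smul_one, ha,
    TensorProduct.tmul_zero]

lemma exists_forall_hasRadicalIndexLE_quotient_tensorProduct (A : Type*) {B : Type*}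
    [CommRing A] [CommRing B] [Algebra A B] [Algebra.FiniteType A B] [IsNoetherianRing B]
    (I : Ideal B) :
    ∃ n : ℕ, ∀ (K : Type w) [Field K] [Algebra A K], HasRadicalIndexLE ((B ⧸ I) ⊗[A] K) n := by
  induction I using WellFoundedGT.induction with
  | ind I ih =>
  have hlt {x : B} (hx : x ∉ I) : I < I ⊔ Ideal.span {x} := by
    rwa [left_lt_sup, Ideal.span_singleton_le_iff_mem]
  by_cases hI : I.IsPrime
  · obtain ⟨a, ha, m, hm⟩ :=
      exists_forall_hasRadicalIndexLE_tensorProduct_of_isDomain.{w, _, _} A (B ⧸ I)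
    obtain ⟨n, hn⟩ := ih _ (hlt fun haI ↦ ha (Ideal.Quotient.eq_zero_iff_mem.mpr haI))
    refine ⟨max m n, fun K _ _ ↦ ?_⟩
    by_cases haK : algebraMap A K a = 0
    · exact (hasRadicalIndexLE_quotient_tensorProduct_of_algebraMap_eq_zero K haK (hn K)).mono
        (le_max_right m n)
    · exact (hm K haK).mono (le_max_left m n)
  · obtain rfl | ⟨x, hx, y, hy, hxy⟩ := Ideal.not_isPrime_iff.mp hI
    · refine ⟨0, fun K _ _ ↦ ?_⟩
      have : Subsingleton ((B ⧸ (⊤ : Ideal B)) ⊗[A] K) := inferInstance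
      exact .of_subsingleton 0
    · obtain ⟨n, hn⟩ := ih _ (hlt hx)
      obtain ⟨n', hn'⟩ := ih _ (hlt hy)
      refine ⟨n + n', fun K _ _ ↦ hasRadicalIndexLE_quotient_tensorProduct_of_mul_le K
        le_sup_left le_sup_left ?_ (hn K) (hn' K)⟩
      simp only [Ideal.sup_mul, Ideal.mul_sup, sup_le_iff, Ideal.mul_le_left, Ideal.mul_le_right,
        Ideal.span_singleton_mul_span_singleton, Ideal.span_singleton_le_iff_mem, hxy, and_self]

theorem exists_forall_hasRadicalIndexLE_tensorProduct (A B : Type*) [CommRing A] [CommRing B]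
    [Algebra A B] [Algebra.FiniteType A B] [IsNoetherianRing B] :
    ∃ n : ℕ, ∀ (K : Type w) [Field K] [Algebra A K], HasRadicalIndexLE (B ⊗[A] K) n := by
  obtain ⟨n, hn⟩ := exists_forall_hasRadicalIndexLE_quotient_tensorProduct.{w, _, _} A (⊥ : Ideal B)
  refine ⟨n, fun K _ _ ↦ ?_⟩
  let e : B ⊗[A] K ≃ₐ[A] (B ⧸ (⊥ : Ideal B)) ⊗[A] K :=
    Algebra.TensorProduct.congr (AlgEquiv.quotientBot A B).symm .refl
  exact (hn K).of_injective (φ := e) e.injective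

end NoetherianInduction

section Geometry

lemma radicalIndexLE_of_forall_stalk {T : Scheme.{u}} {n : ℕ}
    (h : ∀ t : T, HasRadicalIndexLE (T.presheaf.stalk t) n) : T.radicalIndexLE n :=
  fun U g hg ↦ TopCat.Presheaf.section_ext T.sheaf U _ _ fun y hy ↦
    (map_pow (T.presheaf.germ U y hy).hom g n).trans <|
      (h y _ (hg y hy)).trans (map_zero (T.presheaf.germ U y hy).hom).symm

lemma hasRadicalIndexLE_stalk_of_isOpenImmersion {T : Scheme.{u}} {R : CommRingCat.{u}}
    (j : Spec R ⟶ T) [IsOpenImmersion j] {n : ℕ} (h : HasRadicalIndexLE R n) (s : Spec R) :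
    HasRadicalIndexLE (T.presheaf.stalk (j s)) n := by
  have : s.asIdeal.IsPrime := PrimeSpectrum.isPrime s
  let : Algebra R ((Spec R).presheaf.stalk s) := StructureSheaf.stalkAlgebra R s
  have : IsLocalization.AtPrime ((Spec R).presheaf.stalk s) s.asIdeal :=
    StructureSheaf.IsLocalization.to_stalk R s
  exact (h.of_isLocalization s.asIdeal.primeCompl).of_injective
    (ConcreteCategory.bijective_of_isIso (j.stalkMap s)).1

lemma exists_isOpenImmersion_spec_tensorProduct_pullback {X Y : Scheme.{u}} {f : Y ⟶ X}
    {A B K : Type u} [CommRing A] [CommRing B] [Algebra A B] [Field K] (jX : Spec (.of A) ⟶ X)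
    (jY : Spec (.of B) ⟶ Y) [IsOpenImmersion jX] [IsOpenImmersion jY]
    (hcomm : Spec.map (CommRingCat.ofHom (algebraMap A B)) ≫ jX = jY ≫ f) (p : Spec (.of K) ⟶ X)
    (t : ↑(pullback f p)) (ht : pullback.fst f p t ∈ Set.range jY) :
    ∃ (_ : Algebra A K) (j : Spec (.of (B ⊗[A] K)) ⟶ pullback f p),
      IsOpenImmersion j ∧ t ∈ Set.range j := by
  have hp : Set.range p ⊆ Set.range jX := by
    obtain ⟨s, hs⟩ := ht
    rintro _ ⟨q, rfl⟩
    rw [Subsingleton.elim q (pullback.snd f p t), ← Scheme.Hom.comp_apply, ← pullback.condition,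
      Scheme.Hom.comp_apply, ← hs, ← Scheme.Hom.comp_apply, ← hcomm, Scheme.Hom.comp_apply]
    exact ⟨_, rfl⟩
  let ψ := Spec.preimage (IsOpenImmersion.lift jX p hp)
  have hψ : Spec.map ψ ≫ jX = 𝟙 _ ≫ p := by
    rw [Spec.map_preimage, IsOpenImmersion.lift_fac, Category.id_comp]
  let : Algebra A K := ψ.hom.toAlgebra
  let j := pullback.map (Spec.map (CommRingCat.ofHom (algebraMap A B))) (Spec.map ψ) f p
    jY (𝟙 _) jX hcomm hψ
  have htj : t ∈ Set.range j := by
    rw [Scheme.Pullback.range_map]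
    exact ⟨ht, pullback.snd f p t, rfl⟩
  obtain ⟨s, rfl⟩ := htj
  let e := pullbackSpecIso A B K
  refine ⟨_, e.inv ≫ j, inferInstance, e.hom s, ?_⟩
  rw [← Scheme.Hom.comp_apply, Iso.hom_inv_id_assoc]

lemma exists_opens_forall_hasRadicalIndexLE_stalk_pullback {X Y : Scheme.{u}}
    (f : Y ⟶ X) [LocallyOfFiniteType f] [IsLocallyNoetherian Y] (y : Y) :
    ∃ (V : Y.Opens) (n : ℕ), y ∈ V ∧ ∀ (K : Type u) [Field K] (p : Spec (.of K) ⟶ X)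
      (t : ↑(pullback f p)), pullback.fst f p t ∈ V →
        HasRadicalIndexLE ((pullback f p).presheaf.stalk t) n := by
  obtain ⟨U, hU, hyU, -⟩ :=
    exists_isAffineOpen_mem_and_subset (TopologicalSpace.Opens.mem_top (f y))
  obtain ⟨V, hV, hyV, hVU : V ≤ f ⁻¹ᵁ U⟩ :=
    exists_isAffineOpen_mem_and_subset (x := y) (U := f ⁻¹ᵁ U) hyU
  let := (f.appLE U V hVU).hom.toAlgebra
  have : Algebra.FiniteType Γ(X, U) Γ(Y, V) := f.finiteType_appLE hU hV hVU
  have : IsNoetherianRing Γ(Y, V) := IsLocallyNoetherian.component_noetherian ⟨V, hV⟩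
  obtain ⟨n, hn⟩ := exists_forall_hasRadicalIndexLE_tensorProduct.{u, _, _} Γ(X, U) Γ(Y, V)
  refine ⟨V, n, hyV, fun K _ p t ht ↦ ?_⟩
  obtain ⟨_, j, _, s, rfl⟩ := exists_isOpenImmersion_spec_tensorProduct_pullback hU.fromSpec
    hV.fromSpec (hU.SpecMap_appLE_fromSpec f hV hVU) p t (hV.range_fromSpec ▸ ht)
  exact hasRadicalIndexLE_stalk_of_isOpenImmersion j (hn K) s

theorem exists_uniform_radical_index_bound_of_fibers_general {X Y : Scheme.{u}}
    (f : Y ⟶ X) [LocallyOfFiniteType f] [IsLocallyNoetherian Y] [CompactSpace Y] :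
    ∃ n : ℕ, 0 < n ∧ ∀ (K : Type u) [Field K] (p : Spec (.of K) ⟶ X),
      (pullback f p).radicalIndexLE n := by
  choose V n hV hn using exists_opens_forall_hasRadicalIndexLE_stalk_pullback f
  obtain ⟨F, hF⟩ := isCompact_univ.elim_finite_subcover (fun y ↦ (V y : Set Y))
    (fun y ↦ (V y).isOpen) (fun y _ ↦ Set.mem_iUnion.mpr ⟨y, hV y⟩)
  refine ⟨F.sup n + 1, Nat.succ_pos _, fun K _ p ↦ radicalIndexLE_of_forall_stalk fun t ↦ ?_⟩
  obtain ⟨y, hyF, hty⟩ := Set.mem_iUnion₂.mp (hF (Set.mem_univ (pullback.fst f p t)))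
  exact (hn y K p t hty).mono ((Finset.le_sup hyF).trans (Nat.le_succ _))

end Geometry

/-- Proposition 4.3 of the paper.  Let `k` be an algebraically closed field
and `f : Y → X` a morphism of finite type `k`-schemes.  Then there is a positive integer `n`
bounding the radical index of every fiber `Y ×_X Spec κ(x)` of `f` over closed points `x ∈ X`. -/
theorem exists_uniform_radical_index_bound_of_fibers
    (k : Type*) [Field k] [IsAlgClosed k]
    (X Y : Scheme) (sX : X ⟶ Spec (CommRingCat.of k)) (sY : Y ⟶ Spec (CommRingCat.of k))
    [LocallyOfFiniteType sX] [QuasiCompact sX]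
    [LocallyOfFiniteType sY] [QuasiCompact sY]
    (f : Y ⟶ X) (hf : f ≫ sX = sY) :
    ∃ n : ℕ, 0 < n ∧ ∀ x : X, IsClosed ({x} : Set X) →
      (pullback f (X.fromSpecResidueField x)).radicalIndexLE n := by
  subst hf
  have : LocallyOfFiniteType f := locallyOfFiniteType_of_comp f sX
  have : IsLocallyNoetherian Y := LocallyOfFiniteType.isLocallyNoetherian (f ≫ sX)
  have : CompactSpace Y := QuasiCompact.compactSpace_of_compactSpace (f ≫ sX)
  obtain ⟨n, hn, hfiber⟩ := exists_uniform_radical_index_bound_of_fibers_general f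
  exact ⟨n, hn, fun x _ ↦ hfiber (X.residueField x) (X.fromSpecResidueField x)⟩
end

section
/- Let k be an algebraically closed field, let G and M be finite type k-schemes, and let ρ : G ×_k M → M be a morphism (for instance the action morphism of an algebraic group G acting on a variety M). Let H be the fiber product of (ρ, pr₂) : G ×_k M → M ×_k M with the diagonal Δ : M → M ×_k M, and let π : H → M be the induced projection; when ρ is a group action, the fiber of π over a closed point x ∈ M(k) is the isotropy subgroup scheme G_x of the action at x. Then there exists a positive integer N₁ such that for every closed point x of M, the radical index of the fiber π⁻¹(x) = G_x is at most N₁. -/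
open AlgebraicGeometry CategoryTheory CategoryTheory.Limits

/-!
Locally the family `π : H → M` is a finite type algebra `B` over a Noetherian ring `A`, and the
task is to bound the nilpotency exponents in all fibres `κ ⊗[A] B` by one integer. By Noetherian
induction on ideals `I` of `B`, some power of every nilpotent of every fibre lies in `I`. The only
ideals where work is needed are primes, so let `D = B ⧸ I` be a domain. By Noether normalization
over a dense open subset of the closure of the image of `Spec D` in `Spec A`, the algebra `D` is a
finite extension of a polynomial ring `P = A[x₁, …, xₙ]`, and the fibres are `κ[x] ⊗[P] D` with
`κ[x]` a domain. Over the fraction field of `κ[x]` a nilpotent has vanishing `r`-th power, where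
`r` is the number of generators of the `P`-module `D`. What dies over the fraction field is killed
by any `a : P` such that `a • D` lies in a free submodule of `D`. So one `a ≠ 0` kills the `r`-th
powers of nilpotents in all fibres, and the induction proceeds with the larger ideal generated by
`I` and `a`.
-/

universe u w

section Algebra

open TensorProduct nonZeroDivisors MvPolynomial

lemma pow_finrank_eq_zero_of_isNilpotent {K C : Type*} [Field K] [Ring C] [Algebra K C]
    [Module.Finite K C] {g : C} (hg : IsNilpotent g) : g ^ Module.finrank K C = 0 := by
  obtain ⟨m, hm⟩ := hg
  have hker : (1 : C) ∈ LinearMap.ker (LinearMap.mulLeft K g ^ m) := by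
    rw [LinearMap.pow_mulLeft, LinearMap.mem_ker, hm, LinearMap.mulLeft_apply, zero_mul]
  have := Module.End.ker_pow_le_ker_pow_finrank (LinearMap.mulLeft K g) m hker
  rwa [LinearMap.pow_mulLeft, LinearMap.mem_ker, LinearMap.mulLeft_apply, mul_one] at this

lemma exists_smul_mem_of_span_range_eq_top {P N ι : Type*} [CommRing P] [IsDomain P]
    [AddCommGroup N] [Module P N] [Finite ι] {v : ι → N} (hv : Submodule.span P (Set.range v) = ⊤)
    {F : Submodule P N} (hF : ∀ i, ∃ a : P, a ≠ 0 ∧ a • v i ∈ F) :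
    ∃ a : P, a ≠ 0 ∧ ∀ x, a • x ∈ F := by
  classical
  have := Fintype.ofFinite ι
  choose a ha haF using hF
  refine ⟨∏ i, a i, Finset.prod_ne_zero_iff.mpr fun i _ ↦ ha i, fun x ↦ ?_⟩
  suffices Submodule.span P (Set.range v) ≤ F.comap ((∏ i, a i) • LinearMap.id) from
    this (hv ▸ Submodule.mem_top)
  rw [Submodule.span_le]
  rintro _ ⟨i, rfl⟩
  simp only [SetLike.mem_coe, Submodule.mem_comap, LinearMap.smul_apply, LinearMap.id_apply]
  rw [← Finset.prod_erase_mul _ _ (Finset.mem_univ i), mul_smul]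
  exact F.smul_mem _ (haF i)

lemma exists_free_submodule_smul_mem (P N : Type*) [CommRing P] [IsDomain P]
    [AddCommGroup N] [Module P N] [Module.Finite P N] :
    ∃ F : Submodule P N, Module.Free P F ∧ ∃ a : P, a ≠ 0 ∧ ∀ x, a • x ∈ F := by
  obtain ⟨m, v, hv⟩ := Module.Finite.exists_fin (R := P) (M := N)
  obtain ⟨s, hs, hmax⟩ := exists_maximal_linearIndepOn P v
  refine ⟨Submodule.span P (v '' s), ?_, exists_smul_mem_of_span_range_eq_top hv fun i ↦ ?_⟩
  · rw [Set.image_eq_range]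
    exact .of_basis (Module.Basis.span hs)
  · by_cases hi : i ∈ s
    · exact ⟨1, one_ne_zero, by
        rw [one_smul]
        exact Submodule.subset_span ⟨i, hi, rfl⟩⟩
    · exact hmax i hi

lemma exists_ne_zero_smul_ker_rTensor_eq_zero (P N : Type*) [CommRing P] [IsDomain P]
    [AddCommGroup N] [Module P N] [Module.Finite P N] :
    ∃ a : P, a ≠ 0 ∧ ∀ {Q Q' : Type w} [AddCommGroup Q] [Module P Q] [AddCommGroup Q']
      [Module P Q'] (j : Q →ₗ[P] Q'), Function.Injective j →
      ∀ z : Q ⊗[P] N, j.rTensor N z = 0 → a • z = 0 := by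
  obtain ⟨F, hF, a, ha, haF⟩ := exists_free_submodule_smul_mem P N
  refine ⟨a, ha, fun {Q Q'} _ _ _ _ j hj z hz ↦ ?_⟩
  -- Multiplication by `a` on `N` factors through `F`, which is flat.
  let φ : N →ₗ[P] F := (a • LinearMap.id).codRestrict F haF
  have hφ : F.subtype ∘ₗ φ = a • LinearMap.id := rfl
  have hφz : φ.lTensor Q z = 0 := Module.Flat.rTensor_preserves_injective_linearMap j hj <| by
    rw [map_zero, ← LinearMap.comp_apply, LinearMap.rTensor_comp_lTensor,
      ← LinearMap.lTensor_comp_rTensor, LinearMap.comp_apply, hz, map_zero]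
  calc a • z = (F.subtype ∘ₗ φ).lTensor Q z := by simp [hφ]
    _ = 0 := by rw [LinearMap.lTensor_comp, LinearMap.comp_apply, hφz, map_zero]

lemma exists_ne_zero_smul_pow_eq_zero_of_finite (P E : Type*) [CommRing P] [IsDomain P]
    [CommRing E] [Algebra P E] [Module.Finite P E] :
    ∃ (r : ℕ) (a : P), a ≠ 0 ∧ ∀ (R : Type w) [CommRing R] [IsDomain R] [Algebra P R]
      (g : R ⊗[P] E), IsNilpotent g → a • g ^ r = 0 := by
  obtain ⟨a, ha, hkill⟩ := exists_ne_zero_smul_ker_rTensor_eq_zero.{w} P E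
  obtain ⟨m, f, hf⟩ := Module.Finite.exists_fin' P E
  refine ⟨m, a, ha, fun R _ _ _ g hg ↦ ?_⟩
  let K := FractionRing R
  let j : R ⊗[P] E →ₐ[P] K ⊗[P] E :=
    Algebra.TensorProduct.map (IsScalarTower.toAlgHom P R K) (AlgHom.id P E)
  have hrank : Module.finrank K (K ⊗[P] E) ≤ m := by
    have hsurj : Function.Surjective (f.baseChange K) := f.lTensor_surjective K hf
    simpa using LinearMap.finrank_le_finrank_of_surjective hsurj
  have hjg : j (g ^ m) = 0 := by
    rw [map_pow]
    exact pow_eq_zero_of_le hrank (pow_finrank_eq_zero_of_isNilpotent (hg.map j))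
  exact hkill (IsScalarTower.toAlgHom P R K).toLinearMap (IsFractionRing.injective R K) _ hjg

/-- The element `1 ⊗ h` annihilates `g ^ r` for every nilpotent `g` of every fibre `κ ⊗[A] D` of
the `A`-algebra `D` at a field-valued point of `A`. This is the uniform control available over a
domain `D`; the residue fields range over the universe `w`. -/
def KillsFiberwiseNilpotentPow (A : Type*) {D : Type*} [CommRing A] [CommRing D] [Algebra A D]
    (h : D) (r : ℕ) : Prop :=
  ∀ (κ : Type w) [Field κ] [Algebra A κ] (g : κ ⊗[A] D), IsNilpotent g → (1 ⊗ₜ h) * g ^ r = 0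

attribute [local instance] MvPolynomial.algebraMvPolynomial in
lemma exists_killsFiberwiseNilpotentPow_of_finite_mvPolynomial {A D σ : Type*} [CommRing A]
    [IsDomain A] [CommRing D] [Algebra A D] (f : MvPolynomial σ A →ₐ[A] D)
    (hinj : Function.Injective f) (hfin : f.Finite) :
    ∃ (h : D) (r : ℕ), h ≠ 0 ∧ KillsFiberwiseNilpotentPow.{w} A h r := by
  let : Algebra (MvPolynomial σ A) D := f.toAlgebra
  have : IsScalarTower A (MvPolynomial σ A) D := .of_algHom f
  have : Module.Finite (MvPolynomial σ A) D := hfin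
  obtain ⟨r, a, ha, hkill⟩ := exists_ne_zero_smul_pow_eq_zero_of_finite (MvPolynomial σ A) D
  refine ⟨f a, r, (map_ne_zero_iff f hinj).mpr ha, fun κ _ _ g hg ↦ ?_⟩
  -- The fibre `κ ⊗[A] D` is a base change of `D` to the domain `κ[x]`.
  let e : MvPolynomial σ κ ⊗[MvPolynomial σ A] D ≃ₐ[κ] κ ⊗[A] D :=
    Algebra.IsPushout.cancelBaseChangeAlg A κ (MvPolynomial σ A) (MvPolynomial σ κ) D
  have he : e.symm (1 ⊗ₜ f a) = algebraMap (MvPolynomial σ A) _ a := by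
    rw [Algebra.TensorProduct.algebraMap_apply, Algebra.TensorProduct.tmul_one_eq_one_tmul,
      Algebra.IsPushout.cancelBaseChangeAlg_symm_tmul, map_one]
    rfl
  apply e.symm.injective
  rw [map_mul, map_pow, map_zero, he, ← Algebra.smul_def]
  exact hkill _ _ (hg.map e.symm)

attribute [local instance] Algebra.TensorProduct.rightAlgebra in
lemma exists_smul_eq_one_tmul {A A' D : Type*} [CommRing A] [CommRing A'] [CommRing D]
    [Algebra A A'] [Algebra A D] (S : Submonoid A) [IsLocalization S A'] (z : A' ⊗[A] D) :
    ∃ s ∈ S, ∃ d : D, s • z = 1 ⊗ₜ d := by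
  obtain ⟨⟨d, _, s, hs, rfl⟩, h⟩ := IsLocalization.surj (Algebra.algebraMapSubmonoid D S) z
  refine ⟨s, hs, d, ?_⟩
  rw [← algebraMap_smul D, Algebra.smul_def, mul_comm]
  exact h

lemma exists_algEquiv_X_eq_smul_X {R σ : Type*} [CommSemiring R] (c : σ → Rˣ) :
    ∃ e : MvPolynomial σ R ≃ₐ[R] MvPolynomial σ R, ∀ i, e (X i) = c i • X i := by
  refine ⟨.ofAlgHom (aeval fun i ↦ c i • X i) (aeval fun i ↦ (c i)⁻¹ • X i) ?_ ?_, fun i ↦ ?_⟩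
  · ext1 i; simp [Units.smul_def, smul_smul]
  · ext1 i; simp [Units.smul_def, smul_smul]
  · simp

lemma exists_noether_normalization_baseChange_fractionRing (A D : Type*) [CommRing A] [IsDomain A]
    [CommRing D] [Algebra A D] [FaithfulSMul A D] [Algebra.FiniteType A D] :
    ∃ (n : ℕ) (u : Fin n → D),
      let f : MvPolynomial (Fin n) (FractionRing A) →ₐ[FractionRing A] FractionRing A ⊗[A] D :=
        aeval fun i ↦ 1 ⊗ₜ u i
      Function.Injective f ∧ f.IsIntegral := by
  let K := FractionRing A
  have : Nontrivial (K ⊗[A] D) :=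
    (Algebra.TensorProduct.includeLeft_injective (S := A) (A := K)
      (FaithfulSMul.algebraMap_injective A D)).nontrivial
  obtain ⟨n, g, hg, hgi⟩ := exists_integral_inj_algHom_of_fg K (K ⊗[A] D)
  have hdenom (i : Fin n) : ∃ (c : Kˣ) (d : D), c • g (X i) = 1 ⊗ₜ d := by
    obtain ⟨s, hs, d, h⟩ := exists_smul_eq_one_tmul A⁰ (g (X i))
    exact ⟨(IsLocalization.map_units K ⟨s, hs⟩).unit, d, by simpa [Units.smul_def] using h⟩
  choose c u hu using hdenom
  obtain ⟨e, he⟩ := exists_algEquiv_X_eq_smul_X c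
  have hf : aeval (fun i ↦ 1 ⊗ₜ u i) = g.comp e.toAlgHom := by
    ext1 i
    simp [he, ← hu, Units.smul_def]
  refine ⟨n, u, ?_⟩
  simp only [K] at hf
  rw [hf]
  exact ⟨hg.comp e.injective, (RingHom.isIntegral_of_surjective _ e.surjective).trans _ _ hgi⟩

lemma exists_smul_isIntegral_of_isIntegral_localization {P D P' D' : Type*} [CommRing P]
    [CommRing D] [CommRing P'] [CommRing D'] [Algebra P D] [Algebra P P'] [Algebra D D']
    [Algebra P' D'] [Algebra P D'] [IsScalarTower P D D'] [IsScalarTower P P' D']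
    (S : Submonoid P) [IsLocalization S P'] [IsLocalization (Algebra.algebraMapSubmonoid D S) D']
    {d : D} (hd : IsIntegral P' (algebraMap D D' d)) : ∃ s ∈ S, IsIntegral P (s • d) := by
  obtain ⟨s, hs⟩ := hd.exists_multiple_integral_of_isLocalization S
  have hsd : IsIntegral P (IsScalarTower.toAlgHom P D D' ((s : P) • d)) := by
    rwa [map_smul]
  obtain ⟨t, ht, htsd⟩ := IsLocalization.exists_isIntegral_smul_of_isIntegral_map S hsd
  exact ⟨t * s, mul_mem ht s.2, by rwa [mul_smul]⟩

attribute [local instance] algebraMvPolynomial Algebra.TensorProduct.rightAlgebra in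
lemma exists_algebraicIndependent_smul_isIntegral (A D : Type*) [CommRing A] [IsDomain A]
    [CommRing D] [Algebra A D] [FaithfulSMul A D] [Algebra.FiniteType A D] :
    ∃ (n : ℕ) (u : Fin n → D), AlgebraicIndependent A u ∧
      ∀ d, ∃ a : A, a ≠ 0 ∧ (aeval (R := A) u).IsIntegralElem (a • d) := by
  let K := FractionRing A
  obtain ⟨n, u, hinj, hint⟩ := exists_noether_normalization_baseChange_fractionRing A D
  let P := MvPolynomial (Fin n) A
  let P' := MvPolynomial (Fin n) K
  let f : P →ₐ[A] D := aeval u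
  let f' : P' →ₐ[K] K ⊗[A] D := aeval fun i ↦ 1 ⊗ₜ u i
  have hcomp (p : P) : f' (map (algebraMap A K) p) = 1 ⊗ₜ f p :=
    (aeval_map_algebraMap K _ p).trans (aeval_one_tmul A u p)
  refine ⟨n, u, fun p q hpq ↦ ?_, fun d ↦ ?_⟩
  · exact map_injective _ (IsFractionRing.injective A K)
      (hinj ((hcomp p).trans ((congrArg _ hpq).trans (hcomp q).symm)))
  let : Algebra P' (K ⊗[A] D) := f'.toAlgebra
  let : Algebra P D := f.toAlgebra
  let : Algebra P (K ⊗[A] D) := ((algebraMap D (K ⊗[A] D)).comp f.toRingHom).toAlgebra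
  have : IsScalarTower A P D := .of_algHom f
  have : IsScalarTower P D (K ⊗[A] D) := .of_algebraMap_eq fun _ ↦ rfl
  have : IsScalarTower P P' (K ⊗[A] D) := .of_algebraMap_eq fun p ↦ (hcomp p).symm
  let S : Submonoid P := A⁰.map C
  have : IsLocalization S P' := MvPolynomial.isLocalization A⁰ K
  have : IsLocalization (Algebra.algebraMapSubmonoid D S) (K ⊗[A] D) := by
    have hS : Algebra.algebraMapSubmonoid D S = Algebra.algebraMapSubmonoid D A⁰ :=
      Algebra.algebraMapSubmonoid_map_map (A := P) A⁰
    rw [hS]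
    infer_instance
  obtain ⟨_, ⟨a, ha, rfl⟩, hint_a⟩ := exists_smul_isIntegral_of_isIntegral_localization S
    (hint (algebraMap D (K ⊗[A] D) d) : IsIntegral P' _)
  exact ⟨a, nonZeroDivisors.ne_zero ha, by rwa [← algebraMap_smul P a d]⟩

lemma algebraicIndependent_one_tmul {A D ι : Type*} (A' : Type*) [CommRing A] [CommRing A']
    [CommRing D] [Algebra A A'] [Algebra A D] [Module.Flat A A'] {u : ι → D}
    (hu : AlgebraicIndependent A u) :
    AlgebraicIndependent A' fun i ↦ (1 : A') ⊗ₜ[A] u i := by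
  have hcomp : aeval (fun i ↦ (1 : A') ⊗ₜ[A] u i) =
      (Algebra.TensorProduct.map (AlgHom.id A' A') (aeval u)).comp
        (algebraTensorAlgEquiv A A').symm.toAlgHom := by
    ext i
    simp
  rw [AlgebraicIndependent, hcomp]
  exact (Module.Flat.lTensor_preserves_injective_linearMap (M := A') (aeval u).toLinearMap hu).comp
    (algebraTensorAlgEquiv A A').symm.injective

lemma isIntegral_aeval_one_tmul_of_adjoin_eq_top {A A' D ι : Type*} [CommRing A] [CommRing A']
    [CommRing D] [Algebra A A'] [Algebra A D] (u : ι → D) {t : Set D}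
    (ht : Algebra.adjoin A t = ⊤)
    (hint : ∀ d ∈ t, ∃ a : A, IsUnit (algebraMap A A' a) ∧
      (aeval (R := A) u).IsIntegralElem (a • d)) :
    (aeval (R := A') fun i ↦ (1 : A') ⊗ₜ[A] u i).IsIntegral := by
  let f : MvPolynomial ι A →ₐ[A] D := aeval u
  let f' : MvPolynomial ι A' →ₐ[A'] A' ⊗[A] D := aeval fun i ↦ 1 ⊗ₜ u i
  have hcomp : f'.toRingHom.comp (map (algebraMap A A')) =
      (Algebra.TensorProduct.includeRight (R := A) (A := A')).toRingHom.comp f.toRingHom := by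
    ext <;> simp [f, f']
  have hleft (b : A') : f'.IsIntegralElem (b ⊗ₜ 1) := by
    simpa [f'] using f'.toRingHom.isIntegralElem_map (x := C b)
  have hgen (d : D) (hd : d ∈ t) : f'.IsIntegralElem (1 ⊗ₜ d) := by
    obtain ⟨a, ha, had⟩ := hint d hd
    let : Algebra (MvPolynomial ι A) D := f.toAlgebra
    let : Algebra (MvPolynomial ι A') (A' ⊗[A] D) := f'.toAlgebra
    have had' : f'.IsIntegralElem (1 ⊗ₜ (a • d)) :=
      IsIntegral.map_of_comp_eq _ _ hcomp (show IsIntegral (MvPolynomial ι A) (a • d) from had)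
    obtain ⟨b, hb⟩ := ha.exists_left_inv
    have hbad : b ⊗ₜ[A] 1 * 1 ⊗ₜ (a • d) = (1 : A') ⊗ₜ d := by
      rw [Algebra.TensorProduct.tmul_mul_tmul, one_mul, mul_one, ← TensorProduct.smul_tmul,
        Algebra.smul_def, mul_comm, hb]
    exact hbad ▸ (hleft b).mul _ had'
  have hright (d : D) : f'.IsIntegralElem (1 ⊗ₜ d) := by
    have hd : d ∈ Algebra.adjoin A t := ht ▸ Algebra.mem_top
    induction hd using Algebra.adjoin_induction with
    | mem d hd => exact hgen d hd
    | algebraMap a =>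
      rw [← Algebra.TensorProduct.tmul_one_eq_one_tmul]
      exact hleft _
    | add d d' _ _ hd hd' => rw [TensorProduct.tmul_add]; exact hd.add _ hd'
    | mul d d' _ _ hd hd' => simpa using hd.mul _ hd'
  intro z
  induction z with
  | zero => exact f'.toRingHom.isIntegralElem_zero
  | add z z' hz hz' => exact hz.add _ hz'
  | tmul b d => simpa using (hleft b).mul _ (hright d)

lemma exists_away_noether_normalization (A D : Type*) [CommRing A] [IsDomain A]
    [CommRing D] [Algebra A D] [FaithfulSMul A D] [Algebra.FiniteType A D] :
    ∃ s : A, s ≠ 0 ∧ ∃ (n : ℕ)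
      (f : MvPolynomial (Fin n) (Localization.Away s) →ₐ[Localization.Away s]
        Localization.Away s ⊗[A] D), Function.Injective f ∧ f.Finite := by
  obtain ⟨n, u, hu, hint⟩ := exists_algebraicIndependent_smul_isIntegral A D
  obtain ⟨t, ht⟩ := Algebra.FiniteType.out (R := A) (A := D)
  choose a ha had using hint
  let s := ∏ d ∈ t, a d
  let f : MvPolynomial (Fin n) (Localization.Away s) →ₐ[Localization.Away s]
    Localization.Away s ⊗[A] D := aeval fun i ↦ 1 ⊗ₜ u i
  have hunit (d : D) (hd : d ∈ t) : IsUnit (algebraMap A (Localization.Away s) (a d)) :=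
    isUnit_of_dvd_unit (map_dvd _ (Finset.dvd_prod_of_mem a hd))
      (IsLocalization.Away.algebraMap_isUnit s)
  have hf : f.IsIntegral := isIntegral_aeval_one_tmul_of_adjoin_eq_top u ht fun d hd ↦
    ⟨a d, hunit d hd, had d⟩
  have hfin : f.FiniteType := .of_comp_finiteType (f := Algebra.ofId _ _) <| by
    rw [Subsingleton.elim (f.comp _) (Algebra.ofId _ _)]
    exact RingHom.finiteType_algebraMap.mpr inferInstance
  exact ⟨s, Finset.prod_ne_zero_iff.mpr fun d _ ↦ ha d, n, f,
    algebraicIndependent_one_tmul _ hu, hf.to_finite hfin⟩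

namespace KillsFiberwiseNilpotentPow

variable {A D : Type*} [CommRing A] [CommRing D] [Algebra A D] {h : D} {r : ℕ}

lemma smul (hh : KillsFiberwiseNilpotentPow.{w} A h r) (a : A) :
    KillsFiberwiseNilpotentPow.{w} A (a • h) r := fun κ _ _ g hg ↦ by
  rw [TensorProduct.tmul_smul, smul_mul_assoc, hh κ g hg, smul_zero]

lemma of_away {s : A}
    (hh : KillsFiberwiseNilpotentPow.{w} (Localization.Away s)
      ((1 : Localization.Away s) ⊗ₜ[A] h) r) :
    KillsFiberwiseNilpotentPow.{w} A (s • h) r := by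
  intro κ _ _ g hg
  by_cases hs : algebraMap A κ s = 0
  · rw [← TensorProduct.smul_tmul, Algebra.smul_def, hs, zero_mul, TensorProduct.zero_tmul,
      zero_mul]
  let : Algebra (Localization.Away s) κ := (IsLocalization.Away.lift s (IsUnit.mk0 _ hs)).toAlgebra
  have : IsScalarTower A (Localization.Away s) κ :=
    .of_algebraMap_eq fun a ↦ (IsLocalization.Away.lift_eq s (IsUnit.mk0 _ hs) a).symm
  let e := Algebra.TensorProduct.cancelBaseChange A (Localization.Away s) κ κ D
  have heh : e (1 ⊗ₜ (1 ⊗ₜ h)) = 1 ⊗ₜ h := by simp [e]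
  have hzero := congrArg e (hh κ (e.symm g) (hg.map e.symm))
  rw [map_mul, map_pow, map_zero, e.apply_symm_apply, heh] at hzero
  rw [TensorProduct.tmul_smul, smul_mul_assoc, hzero, smul_zero]

lemma of_quotient {I : Ideal A} [Algebra (A ⧸ I) D]
    [IsScalarTower A (A ⧸ I) D] (hh : KillsFiberwiseNilpotentPow.{w} (A ⧸ I) h r) :
    KillsFiberwiseNilpotentPow.{w} A h r := by
  intro κ _ _ g hg
  by_cases hI : ∃ a ∈ I, algebraMap A κ a ≠ 0
  · obtain ⟨a, haI, ha⟩ := hI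
    have ha0 : a • h = 0 := by
      rw [← algebraMap_smul (A ⧸ I), Ideal.Quotient.algebraMap_eq,
        Ideal.Quotient.eq_zero_iff_mem.mpr haI, zero_smul]
    have h1 : (1 : κ) ⊗ₜ[A] h = 0 := by
      rw [← inv_mul_cancel₀ ha, mul_comm, ← Algebra.smul_def, TensorProduct.smul_tmul, ha0,
        TensorProduct.tmul_zero]
    rw [h1, zero_mul]
  push Not at hI
  let : Algebra (A ⧸ I) κ := (Ideal.Quotient.lift I (algebraMap A κ) hI).toAlgebra
  have : IsScalarTower A (A ⧸ I) κ := .of_algebraMap_eq fun _ ↦ rfl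
  have : CompatibleSMul A (A ⧸ I) κ D := .of_algebraMap_surjective _ _ Ideal.Quotient.mk_surjective
  let e : κ ⊗[A ⧸ I] D ≃ₐ[κ] κ ⊗[A] D :=
    Algebra.TensorProduct.equivOfCompatibleSMul A (A ⧸ I) κ κ D
  apply e.symm.injective
  rw [map_mul, map_pow, map_zero]
  exact hh κ _ (hg.map e.symm)

end KillsFiberwiseNilpotentPow

lemma exists_killsFiberwiseNilpotentPow_of_faithfulSMul (A D : Type*) [CommRing A] [IsDomain A]
    [CommRing D] [Algebra A D] [FaithfulSMul A D] [Algebra.FiniteType A D] :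
    ∃ (h : D) (r : ℕ), h ≠ 0 ∧ KillsFiberwiseNilpotentPow.{w} A h r := by
  obtain ⟨s, hs, n, f, hinj, hfin⟩ := exists_away_noether_normalization A D
  have : IsDomain (Localization.Away s) :=
    IsLocalization.isDomain_localization (powers_le_nonZeroDivisors_of_noZeroDivisors hs)
  obtain ⟨h', r, hh', hkill⟩ :=
    exists_killsFiberwiseNilpotentPow_of_finite_mvPolynomial.{w} f hinj hfin
  obtain ⟨c, hc, d, hd⟩ := exists_smul_eq_one_tmul (Submonoid.powers s) h'
  have hcs : IsUnit (algebraMap A (Localization.Away s) (s * c)) :=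
    IsLocalization.map_units (M := .powers s) _ ⟨s * c, mul_mem (Submonoid.mem_powers s) hc⟩
  refine ⟨s • d, r, fun hsd ↦ hh' ?_, .of_away ?_⟩
  · refine hcs.smul_eq_zero.mp ?_
    rw [algebraMap_smul, mul_smul, hd, ← TensorProduct.tmul_smul, hsd, TensorProduct.tmul_zero]
  · rw [← hd, ← algebraMap_smul (Localization.Away s) c h']
    exact hkill.smul _

lemma exists_killsFiberwiseNilpotentPow (A D : Type*) [CommRing A]
    [CommRing D] [IsDomain D] [Algebra A D] [Algebra.FiniteType A D] :
    ∃ (h : D) (r : ℕ), h ≠ 0 ∧ KillsFiberwiseNilpotentPow.{w} A h r := by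
  let I := RingHom.ker (algebraMap A D)
  let : Algebra (A ⧸ I) D := (RingHom.kerLift (algebraMap A D)).toAlgebra
  have : IsScalarTower A (A ⧸ I) D := .of_algebraMap_eq fun _ ↦ rfl
  have : FaithfulSMul (A ⧸ I) D :=
    (faithfulSMul_iff_algebraMap_injective _ _).mpr (RingHom.kerLift_injective _)
  have : Algebra.FiniteType (A ⧸ I) D := .of_restrictScalars_finiteType A _ _
  have : I.IsPrime := RingHom.ker_isPrime _
  obtain ⟨h, r, hh, hkill⟩ := exists_killsFiberwiseNilpotentPow_of_faithfulSMul.{w} (A ⧸ I) D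
  exact ⟨h, r, hh, hkill.of_quotient⟩

/-- The `n`-th power of every nilpotent of every fibre `κ ⊗[A] B` lies in the ideal generated by
`I`. This is the statement proved by Noetherian induction on `I`; its case `I = ⊥` bounds the
nilpotency exponent in all fibres. -/
def FiberwiseNilpotentPowMem (A : Type*) {B : Type*} [CommRing A] [CommRing B] [Algebra A B]
    (I : Ideal B) (n : ℕ) : Prop :=
  ∀ (κ : Type w) [Field κ] [Algebra A κ] (g : κ ⊗[A] B), IsNilpotent g →
    g ^ n ∈ I.map (Algebra.TensorProduct.includeRight : B →ₐ[A] κ ⊗[A] B)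

section NoetherianInduction

variable {A B : Type*} [CommRing A] [CommRing B] [Algebra A B]

namespace FiberwiseNilpotentPowMem

variable {I J : Ideal B} {n m : ℕ}

lemma mono (hI : FiberwiseNilpotentPowMem.{w} A I n) (hIJ : I ≤ J) :
    FiberwiseNilpotentPowMem.{w} A J n :=
  fun κ _ _ g hg ↦ Ideal.map_mono hIJ (hI κ g hg)

lemma mul (hI : FiberwiseNilpotentPowMem.{w} A I n) (hJ : FiberwiseNilpotentPowMem.{w} A J m) :
    FiberwiseNilpotentPowMem.{w} A (I * J) (n + m) := fun κ _ _ g hg ↦ by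
  rw [pow_add, Ideal.map_mul]
  exact Ideal.mul_mem_mul (hI κ g hg) (hJ κ g hg)

lemma of_sup_span_singleton {h : B} {r : ℕ}
    (hIh : FiberwiseNilpotentPowMem.{w} A (I ⊔ Ideal.span {h}) n)
    (hkill : KillsFiberwiseNilpotentPow.{w} A (Ideal.Quotient.mk I h) r) :
    FiberwiseNilpotentPowMem.{w} A I (n + r) := by
  intro κ _ _ g hg
  let q := Algebra.TensorProduct.map (AlgHom.id A κ) (Ideal.Quotient.mkₐ A I)
  have hker : RingHom.ker q = I.map (Algebra.TensorProduct.includeRight : B →ₐ[A] κ ⊗[A] B) := by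
    rw [Algebra.TensorProduct.lTensor_ker _ (Ideal.Quotient.mkₐ_surjective A I)]
    exact congrArg _ (Ideal.Quotient.mkₐ_ker A I)
  have hqh : q (1 ⊗ₜ h) * q g ^ r = 0 := hkill κ (q g) (hg.map q)
  have hmem := hIh κ g hg
  rw [Ideal.map_sup, Ideal.map_span, Set.image_singleton, ← hker] at hmem
  obtain ⟨y, hy, z, hz, hyz⟩ := Submodule.mem_sup.mp hmem
  obtain ⟨c, rfl⟩ := Ideal.mem_span_singleton.mp hz
  rw [RingHom.mem_ker] at hy
  rw [← hker, RingHom.mem_ker, pow_add, ← hyz, add_mul, map_add, map_mul, hy, zero_mul, zero_add,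
    mul_right_comm, map_mul, map_mul, map_pow]
  exact mul_eq_zero_of_left hqh _

end FiberwiseNilpotentPowMem

lemma isOka_exists_fiberwiseNilpotentPowMem :
    Ideal.IsOka fun I : Ideal B ↦ ∃ n, FiberwiseNilpotentPowMem.{w} A I n where
  top := ⟨0, fun κ _ _ g _ ↦ by simp [Ideal.map_top]⟩
  oka := by
    rintro I a ⟨n, hn⟩ ⟨m, hm⟩
    refine ⟨n + m, (hn.mul hm).mono ?_⟩
    rw [Ideal.sup_mul, sup_le_iff, Ideal.span_singleton_mul_le_iff]
    refine ⟨Ideal.mul_le_left, fun b hb ↦ ?_⟩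
    rw [mul_comm]
    exact Ideal.mem_colon_span_singleton.mp hb

variable (A) in
lemma exists_fiberwiseNilpotentPowMem [IsNoetherianRing A] [Algebra.FiniteType A B]
    (I : Ideal B) : ∃ n, FiberwiseNilpotentPowMem.{w} A I n := by
  have : IsNoetherianRing B := Algebra.FiniteType.isNoetherianRing A B
  by_contra hI
  obtain ⟨J, -, hJ⟩ := exists_maximal_ge_of_wellFoundedGT
    (fun J : Ideal B ↦ ¬ ∃ n, FiberwiseNilpotentPowMem.{w} A J n) I hI
  have : J.IsPrime := isOka_exists_fiberwiseNilpotentPowMem.isPrime_of_maximal_not hJ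
  obtain ⟨h, r, hh, hkill⟩ := exists_killsFiberwiseNilpotentPow.{w} A (B ⧸ J)
  obtain ⟨h, rfl⟩ := Ideal.Quotient.mk_surjective h
  have hlt : J < J ⊔ Ideal.span {h} := by
    rw [left_lt_sup, Ideal.span_singleton_le_iff_mem]
    exact fun hm ↦ hh (Ideal.Quotient.eq_zero_iff_mem.mpr hm)
  obtain ⟨n, hn⟩ := not_not.mp (hJ.not_prop_of_gt hlt)
  exact hJ.prop ⟨n + r, hn.of_sup_span_singleton hkill⟩

end NoetherianInduction

/-- The ring-theoretic counterpart of `AlgebraicGeometry.Scheme.radicalIndexLE`: the radical index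
of `R` is at most `n`. It is applied to the stalks of a scheme. -/
def RadicalIndexLE (R : Type*) [CommRing R] (n : ℕ) : Prop :=
  ∀ a : R, IsNilpotent a → a ^ n = 0

namespace RadicalIndexLE

variable {R S : Type*} [CommRing R] [CommRing S] {n m : ℕ}

lemma mono (hR : RadicalIndexLE R n) (hnm : n ≤ m) : RadicalIndexLE R m :=
  fun a ha ↦ pow_eq_zero_of_le hnm (hR a ha)

lemma of_injective (hS : RadicalIndexLE S n) (f : R →+* S) (hf : Function.Injective f) :
    RadicalIndexLE R n := fun a ha ↦ hf <| by
  rw [map_pow, map_zero]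
  exact hS _ (ha.map f)

lemma of_isLocalization [Algebra R S] (hR : RadicalIndexLE R n) (T : Submonoid R)
    [IsLocalization T S] : RadicalIndexLE S n := by
  rintro a ⟨m, hm⟩
  obtain ⟨c, s, rfl⟩ := IsLocalization.exists_mk'_eq T a
  rw [← IsLocalization.mk'_pow, IsLocalization.mk'_eq_zero_iff] at hm ⊢
  obtain ⟨t, ht⟩ := hm
  have htc : IsNilpotent (t * c) := ⟨m + 1, by
    calc (t * c : R) ^ (m + 1) = t ^ m * (t * c ^ m) * c := by ring
      _ = 0 := by rw [ht, mul_zero, zero_mul]⟩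
  exact ⟨t ^ n, by simpa only [mul_pow, SubmonoidClass.coe_pow] using hR _ htc⟩

end RadicalIndexLE

lemma exists_radicalIndexLE_tensorProduct_field (A B : Type*) [CommRing A] [CommRing B]
    [Algebra A B] [IsNoetherianRing A] [Algebra.FiniteType A B] :
    ∃ n : ℕ, ∀ (κ : Type w) [Field κ] [Algebra A κ], RadicalIndexLE (B ⊗[A] κ) n := by
  obtain ⟨n, hn⟩ := exists_fiberwiseNilpotentPowMem.{w} A (⊥ : Ideal B)
  refine ⟨n, fun κ _ _ ↦ .of_injective (S := κ ⊗[A] B) (fun g hg ↦ ?_)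
    (Algebra.TensorProduct.comm A B κ : B ⊗[A] κ →+* κ ⊗[A] B)
    (Algebra.TensorProduct.comm A B κ).injective⟩
  simpa only [Ideal.map_bot, Ideal.mem_bot] using hn κ g hg

end Algebra

section Fibers

open scoped TensorProduct

lemma radicalIndexLE_of_forall_stalk_s2 {X : Scheme.{u}} {n : ℕ}
    (h : ∀ y : X, RadicalIndexLE (X.presheaf.stalk y) n) : X.radicalIndexLE n := by
  intro U g hg
  refine TopCat.Presheaf.section_ext X.sheaf U _ _ fun y hy ↦ ?_
  change X.presheaf.germ U y hy (g ^ n) = X.presheaf.germ U y hy 0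
  rw [map_pow, map_zero]
  exact h y _ (hg y hy)

lemma radicalIndexLE_stalk_spec {R : CommRingCat.{u}} {n : ℕ} (hR : RadicalIndexLE R n)
    (y : Spec R) : RadicalIndexLE ((Spec R).presheaf.stalk y) n := by
  let p : PrimeSpectrum R := y
  exact hR.of_isLocalization (S := (Spec.structureSheaf R).presheaf.stalk p) p.asIdeal.primeCompl

lemma radicalIndexLE_stalk_of_isOpenImmersion {R : CommRingCat.{u}} {X : Scheme.{u}}
    (f : Spec R ⟶ X) [IsOpenImmersion f] {n : ℕ} (hR : RadicalIndexLE R n) {y : X}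
    (hy : y ∈ Set.range f) : RadicalIndexLE (X.presheaf.stalk y) n := by
  obtain ⟨z, rfl⟩ := hy
  exact (radicalIndexLE_stalk_spec hR z).of_injective (f.stalkMap z).hom
    (ConcreteCategory.bijective_of_isIso (f.stalkMap z)).injective

variable {H M : Scheme.{u}} {π : H ⟶ M} {U : M.Opens} {V : H.Opens}

lemma radicalIndexLE_stalk_pullback (hU : IsAffineOpen U) (hV : IsAffineOpen V)
    (e : V ≤ π ⁻¹ᵁ U) [Algebra Γ(M, U) Γ(H, V)]
    (hπ : algebraMap Γ(M, U) Γ(H, V) = (π.appLE U V e).hom)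
    {T : Type u} [CommRing T] [Algebra Γ(M, U) T] {t : Spec (.of T) ⟶ M}
    (ht : Spec.map (CommRingCat.ofHom (algebraMap Γ(M, U) T)) ≫ hU.fromSpec = t)
    {n : ℕ} (hn : RadicalIndexLE (Γ(H, V) ⊗[Γ(M, U)] T) n)
    {y : (pullback π t : Scheme)} (hy : pullback.fst π t y ∈ V) :
    RadicalIndexLE ((pullback π t).presheaf.stalk y) n := by
  let j := pullback.map (Spec.map (CommRingCat.ofHom (algebraMap Γ(M, U) Γ(H, V))))
    (Spec.map (CommRingCat.ofHom (algebraMap Γ(M, U) T))) π t hV.fromSpec (𝟙 _) hU.fromSpec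
    (by rw [hπ]; exact hU.SpecMap_appLE_fromSpec π hV e) (by rw [Category.id_comp, ht])
  let i := pullbackSpecIso Γ(M, U) Γ(H, V) T
  refine radicalIndexLE_stalk_of_isOpenImmersion (i.inv ≫ j) hn ?_
  obtain ⟨z, rfl⟩ : y ∈ Set.range j := by
    rw [Scheme.Pullback.range_map, hV.range_fromSpec]
    exact ⟨hy, by simp⟩
  exact ⟨i.hom z, by rw [← Scheme.Hom.comp_apply, Iso.hom_inv_id_assoc]⟩

lemma exists_algebra_specMap_comp_fromSpec_eq (hU : IsAffineOpen U) {T : Type u} [CommRing T]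
    {t : Spec (.of T) ⟶ M} (ht : Set.range t ⊆ U) :
    ∃ _ : Algebra Γ(M, U) T,
      Spec.map (CommRingCat.ofHom (algebraMap Γ(M, U) T)) ≫ hU.fromSpec = t := by
  let l : Spec (.of T) ⟶ Spec Γ(M, U) :=
    IsOpenImmersion.lift hU.fromSpec t (ht.trans hU.range_fromSpec.ge)
  refine ⟨(Spec.preimage l).hom.toAlgebra, ?_⟩
  change Spec.map (Spec.preimage l) ≫ _ = _
  rw [Spec.map_preimage, IsOpenImmersion.lift_fac]

lemma exists_radicalIndexLE_stalk_pullback_of_isAffineOpen (hU : IsAffineOpen U)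
    (hV : IsAffineOpen V) (e : V ≤ π ⁻¹ᵁ U) [LocallyOfFiniteType π] [IsLocallyNoetherian M] :
    ∃ n : ℕ, ∀ (κ : Type u) [Field κ] (x : Spec (.of κ) ⟶ M) (y : (pullback π x : Scheme)),
      pullback.fst π x y ∈ V → RadicalIndexLE ((pullback π x).presheaf.stalk y) n := by
  let : Algebra Γ(M, U) Γ(H, V) := (π.appLE U V e).hom.toAlgebra
  have : Algebra.FiniteType Γ(M, U) Γ(H, V) := π.finiteType_appLE hU hV e
  have : IsNoetherianRing Γ(M, U) := IsLocallyNoetherian.component_noetherian ⟨U, hU⟩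
  obtain ⟨n, hn⟩ := exists_radicalIndexLE_tensorProduct_field.{u} Γ(M, U) Γ(H, V)
  refine ⟨n, fun κ _ x y hy ↦ ?_⟩
  have hxU : Set.range x ⊆ U := by
    rintro _ ⟨z, rfl⟩
    have hy' : π (pullback.fst π x y) ∈ U := e hy
    rw [← Scheme.Hom.comp_apply, pullback.condition, Scheme.Hom.comp_apply] at hy'
    rwa [Subsingleton.elim z (pullback.snd π x y)]
  obtain ⟨_, hx⟩ := exists_algebra_specMap_comp_fromSpec_eq hU hxU
  exact radicalIndexLE_stalk_pullback hU hV e rfl hx (hn κ) hy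

lemma exists_radicalIndexLE_pullback (π : H ⟶ M) [LocallyOfFiniteType π] [IsLocallyNoetherian M]
    [CompactSpace H] :
    ∃ n : ℕ, 0 < n ∧ ∀ (κ : Type u) [Field κ] (x : Spec (.of κ) ⟶ M),
      (pullback π x).radicalIndexLE n := by
  have hlocal (h : H) : ∃ (V : H.Opens) (n : ℕ), h ∈ V ∧ ∀ (κ : Type u) [Field κ]
      (x : Spec (.of κ) ⟶ M) (y : (pullback π x : Scheme)), pullback.fst π x y ∈ V →
        RadicalIndexLE ((pullback π x).presheaf.stalk y) n := by
    obtain ⟨U, hU, hhU, -⟩ := exists_isAffineOpen_mem_and_subset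
      (TopologicalSpace.Opens.mem_top (π h))
    obtain ⟨V, hV, hhV, e⟩ := exists_isAffineOpen_mem_and_subset (U := π ⁻¹ᵁ U) hhU
    obtain ⟨n, hn⟩ := exists_radicalIndexLE_stalk_pullback_of_isAffineOpen hU hV e
    exact ⟨V, n, hhV, hn⟩
  choose V n hV hn using hlocal
  obtain ⟨t, ht⟩ := isCompact_univ.elim_finite_subcover (fun h ↦ (V h : Set H))
    (fun h ↦ (V h).isOpen) (fun h _ ↦ Set.mem_iUnion.mpr ⟨h, hV h⟩)
  refine ⟨t.sup n + 1, Nat.succ_pos _, fun κ _ x ↦ radicalIndexLE_of_forall_stalk_s2 fun y ↦ ?_⟩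
  obtain ⟨h, hh, hy⟩ := Set.mem_iUnion₂.mp (ht (Set.mem_univ (pullback.fst π x y)))
  exact (hn h κ x y hy).mono ((Finset.le_sup hh).trans (Nat.le_succ _))

end Fibers

theorem exists_uniform_radical_index_bound_of_isotropy_general {S G M : Scheme.{u}}
    [IsNoetherian S] (sG : G ⟶ S) (sM : M ⟶ S) [LocallyOfFiniteType sG] [QuasiCompact sG]
    [LocallyOfFiniteType sM] [QuasiCompact sM]
    (ρ : pullback sG sM ⟶ M) (hρ : ρ ≫ sM = pullback.snd sG sM ≫ sM) :
    ∃ N₁ : ℕ, 0 < N₁ ∧ ∀ (κ : Type u) [Field κ] (x : Spec (.of κ) ⟶ M),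
      (pullback (pullback.snd (pullback.lift ρ (pullback.snd sG sM) hρ) (pullback.diagonal sM))
        x).radicalIndexLE N₁ := by
  let δ := pullback.lift ρ (pullback.snd sG sM) hρ
  have : IsLocallyNoetherian M := LocallyOfFiniteType.isLocallyNoetherian sM
  have : LocallyOfFiniteType (δ ≫ pullback.snd sM sM) := by
    rw [pullback.lift_snd]
    infer_instance
  have : LocallyOfFiniteType δ := locallyOfFiniteType_of_comp δ (pullback.snd sM sM)
  have : CompactSpace (pullback δ (pullback.diagonal sM) : Scheme) :=
    QuasiCompact.compactSpace_of_compactSpace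
      (pullback.fst δ (pullback.diagonal sM) ≫ pullback.snd sG sM ≫ sM)
  exact exists_radicalIndexLE_pullback _

/-- Proposition 4.4 of the paper.  Let `k` be an algebraically closed field,
`G` and `M` finite type `k`-schemes and `ρ : G ×_k M → M` a morphism over `k` (e.g. a group
action).  Let `H` be the fiber product of `(ρ, pr₂) : G ×_k M → M ×_k M` with the diagonal
`Δ : M → M ×_k M`, and `π : H → M` the induced projection, whose fiber over a closed point
`x ∈ M(k)` is the isotropy subgroup scheme `G_x` when `ρ` is a group action.  Then there is a
positive integer `N₁` bounding the radical index of every fiber of `π` over a closed point. -/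
theorem exists_uniform_radical_index_bound_of_isotropy
    (k : Type*) [Field k] [IsAlgClosed k]
    (G M : Scheme) (sG : G ⟶ Spec (CommRingCat.of k)) (sM : M ⟶ Spec (CommRingCat.of k))
    [LocallyOfFiniteType sG] [QuasiCompact sG]
    [LocallyOfFiniteType sM] [QuasiCompact sM]
    (ρ : pullback sG sM ⟶ M) (hρ : ρ ≫ sM = pullback.snd sG sM ≫ sM) :
    ∃ N₁ : ℕ, 0 < N₁ ∧
      ∀ x : M, IsClosed ({x} : Set M) →
        (pullback
            (pullback.snd (pullback.lift ρ (pullback.snd sG sM) hρ) (pullback.diagonal sM))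
            (M.fromSpecResidueField x)).radicalIndexLE N₁ := by
  obtain ⟨N₁, hN₁, h⟩ := exists_uniform_radical_index_bound_of_isotropy_general sG sM ρ hρ
  exact ⟨N₁, hN₁, fun x _ ↦ h (M.residueField x) (M.fromSpecResidueField x)⟩
end

section
/- Let K be a separably closed field of characteristic p > 0, let K̄ be an algebraic closure of K, and for an integer n ≥ 0 let K^{p^{-n}} denote the intermediate field {x ∈ K̄ : x^{p^n} ∈ K}. Let A be a nonzero finitely generated commutative K-algebra such that every nilpotent element f of A ⊗_K K̄ satisfies f^{p^n} = 0. Then A admits a K^{p^{-n}}-rational point; that is, there exists a K-algebra homomorphism A → K^{p^{-n}}. -/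
open TensorProduct

/-- The purely inseparable extension `K^{p^{-n}} = {x ∈ K̄ : x^{pⁿ} ∈ K}` of exponent `n`
of `K` inside a fixed algebraic closure `K̄`, as a `K`-subalgebra of `K̄`. -/
def pInsepClosure (K : Type*) [Field K] (p : ℕ) [Fact p.Prime] [CharP K p] (n : ℕ) :
    Subalgebra K (AlgebraicClosure K) where
  carrier := {x | x ^ p ^ n ∈ (algebraMap K (AlgebraicClosure K)).range}
  mul_mem' := by
    rintro a b ⟨x, hx⟩ ⟨y, hy⟩
    exact ⟨x * y, by rw [map_mul, hx, hy, mul_pow]⟩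
  add_mem' := by
    rintro a b ⟨x, hx⟩ ⟨y, hy⟩
    exact ⟨x + y, by rw [map_add, hx, hy, add_pow_char_pow]⟩
  algebraMap_mem' := fun c => ⟨c ^ p ^ n, map_pow _ _ _⟩

/-!
Let `q = pⁿ` and let `B = K[A^q]` be the subalgebra of `A` generated by the `q`-th powers. As `K̄`
is perfect, every element of `K̄ ⊗ B` is the `q`-th power of an element of `K̄ ⊗ A`; if it is
nilpotent then so is its root, and the hypothesis kills it. So `B` is geometrically reduced, hence
smooth at its generic points, and a smooth algebra over a separably closed field has a rational
point `χ : B → K`. Finally `A` is integral over `B`, so `χ` extends to `Φ : A → K̄`, and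
`Φ a ^ q = χ (a ^ q) ∈ K`.
-/

section Fibers

variable {R S L : Type*} [CommRing R] [CommRing S] [Field L] [Algebra R S] [Algebra R L]

lemma nontrivial_tensorProduct_of_comap_bot_mem_range_comap
    (h : PrimeSpectrum.comap (algebraMap R L) ⊥ ∈
      Set.range (PrimeSpectrum.comap (algebraMap R S))) :
    Nontrivial (L ⊗[R] S) := by
  let P := PrimeSpectrum.comap (algebraMap R L) ⊥
  have : Nontrivial (P.asIdeal.ResidueField ⊗[R] S) :=
    (PrimeSpectrum.nontrivial_iff_mem_rangeComap P).mpr h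
  let residueToL : P.asIdeal.ResidueField →ₐ[R] L :=
    Ideal.ResidueField.liftₐ P.asIdeal (Algebra.ofId R L) (fun x hx => by simpa [P] using hx)
      (fun x hx => by simpa [P, IsUnit.mem_submonoid_iff] using hx)
  algebraize [residueToL.toRingHom]
  have : IsScalarTower R P.asIdeal.ResidueField L :=
    .of_algebraMap_eq' residueToL.comp_algebraMap.symm
  exact (AlgebraTensorModule.cancelBaseChange R P.asIdeal.ResidueField L L S).symm.nontrivial

lemma nonempty_algHom_of_etale [IsSepClosed L] [Algebra.Etale R S]
    (h : PrimeSpectrum.comap (algebraMap R L) ⊥ ∈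
      Set.range (PrimeSpectrum.comap (algebraMap R S))) :
    Nonempty (S →ₐ[R] L) := by
  have := nontrivial_tensorProduct_of_comap_bot_mem_range_comap h
  obtain ⟨P⟩ : Nonempty (PrimeSpectrum (L ⊗[R] S)) := inferInstance
  let point : L ⊗[R] S →ₐ[L] L := (Pi.evalAlgHom L _ P).comp
    (Algebra.FormallyEtale.equivPiOfIsSepClosed L (L ⊗[R] S)).toAlgHom
  exact ⟨(point.restrictScalars R).comp Algebra.TensorProduct.includeRight⟩

variable (R S L) in
lemma nonempty_algHom_of_isIntegral [IsAlgClosed L] [FaithfulSMul R S] [Algebra.IsIntegral R S] :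
    Nonempty (S →ₐ[R] L) := by
  have : Nontrivial (L ⊗[R] S) := nontrivial_tensorProduct_of_comap_bot_mem_range_comap
    (Algebra.IsIntegral.comap_surjective R S _)
  obtain ⟨m, hm⟩ := Ideal.exists_maximal (L ⊗[R] S)
  let := Ideal.Quotient.field m
  let residueEquiv : L ≃ₐ[L] (L ⊗[R] S) ⧸ m := AlgEquiv.ofBijective (Algebra.ofId L _)
    IsAlgClosed.algebraMap_bijective_of_isIntegral
  let point := residueEquiv.symm.toAlgHom.comp (Ideal.Quotient.mkₐ L m)
  exact ⟨(point.restrictScalars R).comp Algebra.TensorProduct.includeRight⟩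

lemma exists_algHom_comp_val_eq_of_isIntegral [IsAlgClosed L] {B : Subalgebra R S}
    [Algebra.IsIntegral B S] (χ : B →ₐ[R] L) : ∃ Φ : S →ₐ[R] L, Φ.comp B.val = χ := by
  algebraize [χ.toRingHom]
  have : IsScalarTower R B L := .of_algebraMap_eq' χ.comp_algebraMap.symm
  obtain ⟨Φ⟩ := nonempty_algHom_of_isIntegral B S L
  exact ⟨Φ.restrictScalars R, AlgHom.ext Φ.commutes⟩

end Fibers

section SmoothPoints

lemma infinite_of_isSepClosed (K : Type*) [Field K] [IsSepClosed K] : Infinite K := by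
  by_contra hfin
  have : Finite K := not_infinite_iff_finite.mp hfin
  have : IsAlgClosed K := IsSepClosed.isAlgClosed_of_perfectField K
  exact hfin inferInstance

lemma exists_comap_aeval_bot_mem_of_isOpen {K σ : Type*} [Field K] [Infinite K]
    {U : Set (PrimeSpectrum (MvPolynomial σ K))} (hU : IsOpen U) (hne : U.Nonempty) :
    ∃ x : σ → K, PrimeSpectrum.comap
      (MvPolynomial.aeval x : MvPolynomial σ K →ₐ[K] K).toRingHom ⊥ ∈ U := by
  obtain ⟨P, hP⟩ := hne
  obtain ⟨_, ⟨_, ⟨f, rfl⟩, rfl⟩, hPf, hfU⟩ :=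
    PrimeSpectrum.isBasis_basic_opens.exists_subset_of_mem_open hP hU
  have hf : f ≠ 0 := by
    rintro rfl
    simp at hPf
  obtain ⟨x, hx⟩ : ∃ x : σ → K, MvPolynomial.eval x f ≠ 0 := by
    by_contra! hzero
    exact hf (MvPolynomial.funext fun x => by simpa using hzero x)
  exact ⟨x, hfU (by simpa [MvPolynomial.aeval_eq_eval] using hx)⟩

lemma nonempty_algHom_of_isStandardSmooth (K S : Type*) [Field K] [IsSepClosed K] [CommRing S]
    [Algebra K S] [Nontrivial S] [Algebra.IsStandardSmooth K S] : Nonempty (S →ₐ[K] K) := by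
  have := infinite_of_isSepClosed K
  have hsmooth : (algebraMap K S).IsStandardSmooth :=
    RingHom.isStandardSmooth_algebraMap.mpr inferInstance
  obtain ⟨n, g, hgK, hg⟩ := hsmooth.exists_etale_mvPolynomial
  algebraize [g]
  have : IsScalarTower K (MvPolynomial (Fin n) K) S := .of_algebraMap_eq' hgK.symm
  have hopen : IsOpen (Set.range (PrimeSpectrum.comap (algebraMap (MvPolynomial (Fin n) K) S))) :=
    PrimeSpectrum.isOpenMap_comap_of_hasGoingDown_of_finitePresentation.isOpen_range
  obtain ⟨x, hx⟩ := exists_comap_aeval_bot_mem_of_isOpen hopen (Set.range_nonempty _)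
  algebraize [(MvPolynomial.aeval x : MvPolynomial (Fin n) K →ₐ[K] K).toRingHom]
  have : IsScalarTower K (MvPolynomial (Fin n) K) K :=
    .of_algebraMap_eq' (MvPolynomial.aeval x).comp_algebraMap.symm
  obtain ⟨point⟩ := nonempty_algHom_of_etale hx
  exact ⟨point.restrictScalars K⟩

end SmoothPoints

section GeometricallyReduced

variable {K B : Type*} [Field K] [CommRing B] [Algebra K B]

lemma linearIndependent_pow_of_isGeometricallyReduced (p : ℕ) [ExpChar K p]
    [Algebra.IsGeometricallyReduced K B] {ι : Type*} {b : ι → B} (hb : LinearIndependent K b) :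
    LinearIndependent K (fun i => b i ^ p) := by
  rw [linearIndependent_iff']
  intro s g hg i hi
  have : Nontrivial B := ⟨b i, 0, hb.ne_zero i⟩
  have : ExpChar (AlgebraicClosure K ⊗[K] B) p :=
    expChar_of_injective_algebraMap (algebraMap K _).injective p
  choose γ hγ using fun j =>
    IsAlgClosed.exists_pow_nat_eq (algebraMap K (AlgebraicClosure K) (g j)) (expChar_pos K p)
  have hpow : (∑ j ∈ s, γ j • ((1 : AlgebraicClosure K) ⊗ₜ[K] b j)) ^ p = 0 := by
    calc (∑ j ∈ s, γ j • ((1 : AlgebraicClosure K) ⊗ₜ[K] b j)) ^ p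
        = ∑ j ∈ s, 1 ⊗ₜ[K] (g j • b j ^ p) := by
          simp_rw [sum_pow_char, smul_pow, hγ, Algebra.TensorProduct.tmul_pow, one_pow,
            algebraMap_smul, tmul_smul]
      _ = 0 := by rw [← tmul_sum, hg, tmul_zero]
  have hγi : γ i = 0 := linearIndependent_iff'.mp
    (Module.Flat.linearIndependent_one_tmul (S := AlgebraicClosure K) hb) s γ
    (pow_eq_zero_iff (expChar_pos K p).ne' |>.mp hpow) i hi
  have hgi : algebraMap K (AlgebraicClosure K) (g i) = 0 := by
    rw [← hγ i, hγi, zero_pow (expChar_pos K p).ne']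
  exact (map_eq_zero _).mp hgi

lemma isGeometricallyReduced_of_isLocalization (M : Submonoid B) (C : Type*) [CommRing C]
    [Algebra K C] [Algebra B C] [IsScalarTower K B C] [IsLocalization M C]
    [Algebra.IsGeometricallyReduced K B] : Algebra.IsGeometricallyReduced K C := by
  rw [Algebra.isGeometricallyReduced_field_iff]
  let baseChange : AlgebraicClosure K ⊗[K] B →ₐ[AlgebraicClosure K] AlgebraicClosure K ⊗[K] C :=
    Algebra.TensorProduct.map (AlgHom.id _ _) (IsScalarTower.toAlgHom K B C)
  algebraize [baseChange.toRingHom]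
  have : IsScalarTower (AlgebraicClosure K) (AlgebraicClosure K ⊗[K] B)
      (AlgebraicClosure K ⊗[K] C) := .of_algebraMap_eq' baseChange.comp_algebraMap.symm
  let M' := M.map (Algebra.TensorProduct.includeRight : B →ₐ[K] AlgebraicClosure K ⊗[K] B)
  have : IsLocalization M' (AlgebraicClosure K ⊗[K] C) :=
    IsLocalization.tensorProduct_tensorProduct_right K (AlgebraicClosure K) M C
      (by ext; simp [RingHom.algebraMap_toAlgebra, baseChange])
  exact isReduced_of_injective _
    (IsLocalization.algEquiv M' (AlgebraicClosure K ⊗[K] C) (Localization M')).injective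

lemma formallySmooth_of_isGeometricallyReduced (K E : Type*) [Field K] [Field E] [Algebra K E]
    [Algebra.EssFiniteType K E] [Algebra.IsGeometricallyReduced K E] :
    Algebra.FormallySmooth K E := by
  obtain _ | ⟨p, _, _⟩ := CharP.exists' K
  · infer_instance
  · have : ExpChar K p := .prime Fact.out
    obtain ⟨s, hs, hsep⟩ :=
      exists_isTranscendenceBasis_and_isSeparable_of_linearIndepOn_pow_of_essFiniteType
        (k := K) (K := E) p Fact.out
        fun s hs => linearIndependent_pow_of_isGeometricallyReduced p hs
    have : Algebra.IsSeparable (IntermediateField.adjoin K (Set.range ((↑) : s → E))) E := by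
      convert! hsep <;> simp
    exact .of_algebraicIndependent_of_isSeparable hs.1

lemma isField_localizationAtPrime_of_mem_minimalPrimes [IsReduced B] {P : Ideal B} [P.IsPrime]
    (hP : P ∈ minimalPrimes B) : IsField (Localization.AtPrime P) :=
  PrimeSpectrum.subsingleton_iff_isField_of_isReduced.mp
    (IsLocalization.subsingleton_primeSpectrum_of_mem_minimalPrimes P hP _)

variable (K) in
lemma isSmoothAt_of_mem_minimalPrimes [Algebra.IsGeometricallyReduced K B]
    [Algebra.FiniteType K B] {P : Ideal B} [P.IsPrime] (hP : P ∈ minimalPrimes B) :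
    Algebra.IsSmoothAt K P := by
  have : IsReduced B := Algebra.isReduced_of_isGeometricallyReduced K
  let := (isField_localizationAtPrime_of_mem_minimalPrimes hP).toField
  have : Algebra.IsGeometricallyReduced K (Localization.AtPrime P) :=
    isGeometricallyReduced_of_isLocalization P.primeCompl _
  exact formallySmooth_of_isGeometricallyReduced K (Localization.AtPrime P)

variable (K B) in
lemma nonempty_algHom_of_isGeometricallyReduced [IsSepClosed K] [Nontrivial B]
    [Algebra.IsGeometricallyReduced K B] [Algebra.FiniteType K B] : Nonempty (B →ₐ[K] K) := by
  obtain ⟨P, hP⟩ := Ideal.nonempty_minimalPrimes (I := (⊥ : Ideal B)) bot_ne_top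
  have : P.IsPrime := hP.1.1
  have := isSmoothAt_of_mem_minimalPrimes K hP
  have : Algebra.FinitePresentation K B := Algebra.FinitePresentation.of_finiteType.mp ‹_›
  obtain ⟨f, hf, hsmooth⟩ := Algebra.IsSmoothAt.exists_notMem_isStandardSmooth K P
  have hunit : IsUnit (algebraMap B (Localization.AtPrime P) f) :=
    IsLocalization.map_units _ (⟨f, hf⟩ : P.primeCompl)
  have : Nontrivial (Localization.Away f) :=
    (IsLocalization.Away.lift f hunit : Localization.Away f →+* _).domain_nontrivial
  obtain ⟨point⟩ := nonempty_algHom_of_isStandardSmooth K (Localization.Away f)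
  exact ⟨point.comp (Algebra.algHom K B _)⟩

end GeometricallyReduced

section PowSubalgebra

/-- The subalgebra `K[A^q]` of `A` generated by all `q`-th powers of elements of `A`. In exponential
characteristic `p` with `q = pⁿ` it is the image of the `n`-fold relative Frobenius of `A`. -/
def powSubalgebra (K A : Type*) [CommRing K] [CommRing A] [Algebra K A] (q : ℕ) :
    Subalgebra K A :=
  Algebra.adjoin K (Set.range fun a : A => a ^ q)

lemma pow_mem_powSubalgebra (K : Type*) {A : Type*} [CommRing K] [CommRing A] [Algebra K A]
    (a : A) (q : ℕ) : a ^ q ∈ powSubalgebra K A q :=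
  Algebra.subset_adjoin ⟨a, rfl⟩

lemma isIntegral_powSubalgebra (K A : Type*) [CommRing K] [CommRing A] [Algebra K A] {q : ℕ}
    (hq : 0 < q) : Algebra.IsIntegral (powSubalgebra K A q) A where
  isIntegral a := .of_pow hq <|
    isIntegral_algebraMap (x := (⟨a ^ q, pow_mem_powSubalgebra K a q⟩ : powSubalgebra K A q))

lemma finiteType_powSubalgebra (K A : Type*) [CommRing K] [IsNoetherianRing K] [CommRing A]
    [Algebra K A] [Algebra.FiniteType K A] {q : ℕ} (hq : 0 < q) :
    Algebra.FiniteType K (powSubalgebra K A q) := by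
  have := isIntegral_powSubalgebra K A hq
  have : Algebra.FiniteType (powSubalgebra K A q) A := .of_restrictScalars_finiteType K _ A
  have : Module.Finite (powSubalgebra K A q) A := Algebra.IsIntegral.finite
  exact ⟨fg_of_fg_of_fg K (powSubalgebra K A q) A Algebra.FiniteType.out Module.Finite.fg_top
    Subtype.val_injective⟩

lemma map_val_powSubalgebra_mem_range_iterateFrobenius {K A L : Type*} [CommRing K] [CommRing A]
    [CommRing L] [Algebra K A] [Algebra K L] (p n : ℕ) [ExpChar L p] [PerfectRing L p]
    [ExpChar (L ⊗[K] A) p] (x : L ⊗[K] powSubalgebra K A (p ^ n)) :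
    Algebra.TensorProduct.map (AlgHom.id L L) (powSubalgebra K A (p ^ n)).val x ∈
      (iterateFrobenius (L ⊗[K] A) p n).range := by
  have tmul_one_mem (l : L) : l ⊗ₜ[K] (1 : A) ∈ (iterateFrobenius (L ⊗[K] A) p n).range := by
    obtain ⟨r, rfl⟩ := (bijective_iterateFrobenius L p n).surjective l
    exact ⟨r ⊗ₜ 1, by simp [iterateFrobenius_def, Algebra.TensorProduct.tmul_pow]⟩
  have one_tmul_mem {a : A} (ha : a ∈ powSubalgebra K A (p ^ n)) :
      (1 : L) ⊗ₜ[K] a ∈ (iterateFrobenius (L ⊗[K] A) p n).range := by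
    induction ha using Algebra.adjoin_induction with
    | mem a ha =>
      obtain ⟨r, rfl⟩ := ha
      exact ⟨1 ⊗ₜ r, by simp [iterateFrobenius_def, Algebra.TensorProduct.tmul_pow]⟩
    | algebraMap k =>
      rw [← mul_one (algebraMap K A k), ← Algebra.smul_def, ← smul_tmul]
      exact tmul_one_mem _
    | add a b _ _ ha hb => simpa only [tmul_add] using add_mem ha hb
    | mul a b _ _ ha hb =>
      simpa only [Algebra.TensorProduct.tmul_mul_tmul, mul_one] using mul_mem ha hb
  induction x with
  | zero => simpa only [map_zero] using zero_mem _
  | tmul l b =>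
    simpa [-RingHom.mem_range] using mul_mem (tmul_one_mem l) (one_tmul_mem b.2)
  | add x y hx hy => simpa only [map_add] using add_mem hx hy

lemma isGeometricallyReduced_powSubalgebra {K A : Type*} [Field K] [CommRing A] [Nontrivial A]
    [Algebra K A] (p n : ℕ) [ExpChar K p]
    (hrad : ∀ f : AlgebraicClosure K ⊗[K] A, IsNilpotent f → f ^ p ^ n = 0) :
    Algebra.IsGeometricallyReduced K (powSubalgebra K A (p ^ n)) := by
  rw [Algebra.isGeometricallyReduced_field_iff]
  have : ExpChar (AlgebraicClosure K) p :=
    expChar_of_injective_algebraMap (algebraMap K _).injective p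
  have : ExpChar (AlgebraicClosure K ⊗[K] A) p :=
    expChar_of_injective_algebraMap (algebraMap K _).injective p
  let incl := Algebra.TensorProduct.map (AlgHom.id (AlgebraicClosure K) (AlgebraicClosure K))
    (powSubalgebra K A (p ^ n)).val
  have hincl : Function.Injective incl :=
    Module.Flat.lTensor_preserves_injective_linearMap
      (powSubalgebra K A (p ^ n)).val.toLinearMap Subtype.val_injective
  refine ⟨fun x hx => hincl ?_⟩
  obtain ⟨r, hr⟩ := map_val_powSubalgebra_mem_range_iterateFrobenius p n x
  have hroot : r ^ p ^ n = incl x := hr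
  have hnil : IsNilpotent (r ^ p ^ n) := hroot ▸ hx.map incl
  rw [← hroot, map_zero, hrad r hnil.of_pow]

end PowSubalgebra

/-- Lemma 5.1 / `algebra1` of the paper.  Let `K` be a separably closed field
of characteristic `p > 0` and let `A` be a nonzero finitely generated commutative `K`-algebra
such that every nilpotent element `f` of `A ⊗_K K̄` satisfies `f ^ pⁿ = 0` (radical index at most
`pⁿ`).  Then `A` admits a `K^{p^{-n}}`-rational point, i.e. a `K`-algebra homomorphism
`A → K^{p^{-n}}`. -/
theorem exists_pInsep_point_of_radical_index_le
    (K : Type*) [Field K] [IsSepClosed K] (p : ℕ) [Fact p.Prime] [CharP K p] (n : ℕ)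
    (A : Type*) [CommRing A] [Algebra K A] [Nontrivial A]
    (hfg : Algebra.FiniteType K A)
    (hrad : ∀ f : A ⊗[K] AlgebraicClosure K, IsNilpotent f → f ^ p ^ n = 0) :
    Nonempty (A →ₐ[K] pInsepClosure K p n) := by
  have hq : 0 < p ^ n := pow_pos (Fact.out : p.Prime).pos n
  have hrad' (f : AlgebraicClosure K ⊗[K] A) (hf : IsNilpotent f) : f ^ p ^ n = 0 := by
    let swap := Algebra.TensorProduct.comm K (AlgebraicClosure K) A
    exact swap.injective (by rw [map_pow, map_zero, hrad _ (hf.map swap)])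
  have : ExpChar K p := .prime Fact.out
  have := isGeometricallyReduced_powSubalgebra p n hrad'
  have := finiteType_powSubalgebra K A hq
  have := isIntegral_powSubalgebra K A hq
  obtain ⟨χ⟩ := nonempty_algHom_of_isGeometricallyReduced K (powSubalgebra K A (p ^ n))
  obtain ⟨Φ, hΦ⟩ := exists_algHom_comp_val_eq_of_isIntegral
    ((Algebra.ofId K (AlgebraicClosure K)).comp χ)
  refine ⟨Φ.codRestrict (pInsepClosure K p n) fun a => ?_⟩
  let aq : powSubalgebra K A (p ^ n) := ⟨a ^ p ^ n, pow_mem_powSubalgebra K a _⟩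
  exact ⟨χ aq, by simpa [aq] using (AlgHom.congr_fun hΦ aq).symm⟩
end

section
/- Let K be a separably closed field of characteristic p > 0 with algebraic closure K̄, and let K^{p^{-n}} = {x ∈ K̄ : x^{p^n} ∈ K}. Let A be a reduced finitely generated commutative K-algebra such that every nilpotent element f of A ⊗_K K̄ satisfies f^{p^n} = 0, and set A_n = A ⊗_K K^{p^{-n}}. Then the natural inclusion Rad(A_n) ⊗_{K^{p^{-n}}} K̄ ⊆ Rad(A ⊗_K K̄) is an equality: the nilradical of A ⊗_K K̄ is generated by the image of the nilradical of A_n. Equivalently, the quotient A_n / Rad(A_n) is a geometrically reduced K^{p^{-n}}-algebra. -/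
set_option synthInstance.maxHeartbeats 400000

open TensorProduct

/-!
Write `q = pⁿ`, and let `b` be a basis of `L` over `K`, where `L` is perfect (such as `K̄`). The
roots `b_j^{1/q}` span `L` over `F = K^{1/q}`: take `q`-th roots in the expansion of `x^q` along
`b`. Hence every `f ∈ A ⊗ L` can be written as `∑ g_j b_j^{1/q}` with `g_j ∈ A ⊗ F`. Each `g_j^q`
lies in `A`, so `f^q = ∑ g_j^q b_j` is the expansion of `f^q` along the `A`-basis `b` of `A ⊗ L`,
and `f^q = 0` forces every `g_j` to be nilpotent.
-/

theorem charP_of_algebra (K : Type*) {R : Type*} [CommSemiring K] [Semiring R] [Algebra K R]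
    [Nontrivial R] (p : ℕ) [Fact p.Prime] [CharP K p] : CharP R p :=
  (CharP.charP_iff_prime_eq_zero Fact.out).2 <| by
    rw [← map_natCast (algebraMap K R), CharP.cast_eq_zero, map_zero]

theorem sum_pow_char_pow_of_algebra (K : Type*) {R ι : Type*} [CommSemiring K] [CommSemiring R]
    [Algebra K R] (p n : ℕ) [Fact p.Prime] [CharP K p] (s : Finset ι) (f : ι → R) :
    (∑ i ∈ s, f i) ^ p ^ n = ∑ i ∈ s, f i ^ p ^ n := by
  nontriviality R
  have : CharP R p := charP_of_algebra K p
  exact sum_pow_char_pow p n s f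

section

variable {K L A ι : Type*} [CommRing K] [CommRing L] [Algebra K L] [CommRing A] [Algebra K A]
  {F : Subalgebra K L}

theorem exists_finsupp_sum_map_mul_one_tmul {r : ι → L}
    (hspan : Submodule.span F (Set.range r) = ⊤) (f : A ⊗[K] L) :
    ∃ g : ι →₀ A ⊗[K] F,
      f = g.sum fun j y ↦ Algebra.TensorProduct.map (.id K A) F.val y * 1 ⊗ₜ r j := by
  induction f with
  | zero => exact ⟨0, Finsupp.sum_zero_index.symm⟩
  | tmul a x =>
    obtain ⟨c, rfl⟩ := Finsupp.mem_span_range_iff_exists_finsupp.1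
      (hspan ▸ Submodule.mem_top : x ∈ Submodule.span F (Set.range r))
    refine ⟨c.mapRange (a ⊗ₜ ·) (tmul_zero _ a), ?_⟩
    rw [Finsupp.sum_mapRange_index (by simp), Finsupp.sum, tmul_sum]
    simp [Finsupp.sum, Subalgebra.smul_def]
  | add f₁ f₂ ih₁ ih₂ =>
    obtain ⟨g₁, rfl⟩ := ih₁
    obtain ⟨g₂, rfl⟩ := ih₂
    exact ⟨g₁ + g₂, (Finsupp.sum_add_index' (by simp) (by simp [add_mul])).symm⟩

variable (p n : ℕ) [Fact p.Prime] [CharP K p]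

theorem pow_mem_range_includeLeft {E : Type*} [CommRing E] [Algebra K E]
    (hE : ∀ y : E, y ^ p ^ n ∈ (algebraMap K E).range) (z : A ⊗[K] E) :
    z ^ p ^ n ∈ (Algebra.TensorProduct.includeLeft : A →ₐ[K] A ⊗[K] E).range := by
  obtain ⟨s, rfl⟩ := exists_finset z
  rw [sum_pow_char_pow_of_algebra K]
  refine sum_mem fun i _ ↦ ?_
  obtain ⟨k, hk⟩ := hE i.2
  refine ⟨k • i.1 ^ p ^ n, ?_⟩
  simp [← hk, Algebra.algebraMap_eq_smul_one, smul_tmul']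

variable [PerfectRing L p]

theorem span_range_eq_top_of_pow_eq_basis (b : Module.Basis ι K L) {r : ι → L}
    (hr : ∀ j, r j ^ p ^ n = b j) (hF : ∀ x : L, x ^ p ^ n ∈ (algebraMap K L).range → x ∈ F) :
    Submodule.span F (Set.range r) = ⊤ := by
  refine eq_top_iff.2 fun x _ ↦ ?_
  let root : K → L := fun k ↦ (powMulEquiv L (p ^ n)).symm (algebraMap K L k)
  have root_pow (k : K) : root k ^ p ^ n = algebraMap K L k := powMulEquiv_symm_pow_p ..
  have root_mem (k : K) : root k ∈ F := hF _ ⟨k, (root_pow k).symm⟩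
  have expansion : x = ∑ j ∈ (b.repr (x ^ p ^ n)).support, root (b.repr (x ^ p ^ n) j) * r j := by
    apply (powMulEquiv L (p ^ n)).injective
    simp only [powMulEquiv_apply, sum_pow_char_pow_of_algebra K, mul_pow, root_pow, hr,
      ← Algebra.smul_def]
    exact (b.linearCombination_repr _).symm
  rw [expansion]
  exact sum_mem fun j _ ↦ Submodule.smul_mem _ (⟨_, root_mem _⟩ : F)
    (Submodule.subset_span ⟨j, rfl⟩)

theorem mem_map_nilradical_of_pow_eq_zero [Module.Free K L]
    (hF : ∀ x : L, x ∈ F ↔ x ^ p ^ n ∈ (algebraMap K L).range) {f : A ⊗[K] L}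
    (hf : f ^ p ^ n = 0) :
    f ∈ (nilradical (A ⊗[K] F)).map (Algebra.TensorProduct.map (.id K A) F.val) := by
  let b := Module.Free.chooseBasis K L
  let r j := (powMulEquiv L (p ^ n)).symm (b j)
  have r_pow (j) : r j ^ p ^ n = b j := powMulEquiv_symm_pow_p ..
  obtain ⟨g, rfl⟩ := exists_finsupp_sum_map_mul_one_tmul
    (span_range_eq_top_of_pow_eq_basis p n b r_pow fun x ↦ (hF x).2) f
  have pow_mem_range (y : F) : y ^ p ^ n ∈ (algebraMap K F).range := by
    obtain ⟨k, hk⟩ := (hF y).1 y.2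
    exact ⟨k, Subtype.ext hk⟩
  choose a ha using fun j ↦ pow_mem_range_includeLeft p n pow_mem_range (g j)
  have coeff_expansion : ∑ j ∈ g.support, a j • Algebra.TensorProduct.basis A b j = 0 := by
    rw [← hf, Finsupp.sum, sum_pow_char_pow_of_algebra K]
    refine Finset.sum_congr rfl fun j _ ↦ ?_
    rw [mul_pow, ← map_pow, ← ha]
    simp [r_pow, smul_tmul']
  have coeff_eq_zero := linearIndependent_iff'.1
    (Algebra.TensorProduct.basis A b).linearIndependent _ _ coeff_expansion
  refine sum_mem fun j hj ↦ Ideal.mul_mem_right _ _ <| Ideal.mem_map_of_mem _ <|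
    mem_nilradical.2 ⟨p ^ n, ?_⟩
  rw [← ha, coeff_eq_zero j hj, map_zero]

theorem nilradical_baseChange_eq_map_nilradical_general [Module.Free K L]
    (hF : ∀ x : L, x ∈ F ↔ x ^ p ^ n ∈ (algebraMap K L).range)
    (hrad : ∀ f : A ⊗[K] L, IsNilpotent f → f ^ p ^ n = 0) :
    (nilradical (A ⊗[K] F)).map (Algebra.TensorProduct.map (.id K A) F.val) =
      nilradical (A ⊗[K] L) :=
  le_antisymm (Ideal.map_le_iff_le_comap.2 fun _ hx ↦ IsNilpotent.map hx _)
    fun f hf ↦ mem_map_nilradical_of_pow_eq_zero p n hF (hrad f hf)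

end

/-- Let `K` be a separably closed field of characteristic `p > 0`, let `A` be
a reduced finitely generated `K`-algebra whose base change `A ⊗_K K̄` has radical index at most
`pⁿ`, and set `A_n = A ⊗_K K^{p^{-n}}`.  Then the nilradical of `A ⊗_K K̄` is generated by the
image of the nilradical of `A_n` under the natural map `A_n → A ⊗_K K̄`. -/
theorem nilradical_baseChange_eq_map_nilradical
    (K : Type*) [Field K] [IsSepClosed K] (p : ℕ) [Fact p.Prime] [CharP K p] (n : ℕ)
    (A : Type*) [CommRing A] [Algebra K A] [IsReduced A]
    (hfg : Algebra.FiniteType K A)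
    (hrad : ∀ f : A ⊗[K] AlgebraicClosure K, IsNilpotent f → f ^ p ^ n = 0) :
    Ideal.map
        (Algebra.TensorProduct.map (AlgHom.id K A) (pInsepClosure K p n).val :
          A ⊗[K] (pInsepClosure K p n) →ₐ[K] A ⊗[K] AlgebraicClosure K)
        (nilradical (A ⊗[K] (pInsepClosure K p n)))
      = nilradical (A ⊗[K] AlgebraicClosure K) := by
  have : ExpChar (AlgebraicClosure K) p := .prime Fact.out
  exact nilradical_baseChange_eq_map_nilradical_general p n (fun _ ↦ Iff.rfl) hrad
end

section
/- Let C ⊆ B be an inclusion of commutative rings and let q be a positive integer such that b^q ∈ C for every b ∈ B (e.g. q = p^{n₁} when B is of characteristic p and purely inseparable of exponent n₁ over C). Let J ⊆ C be an ideal such that the natural map C/J → B/JB is injective. Suppose n is a positive integer such that every element c ∈ C whose image in C/J is nilpotent satisfies c^n ∈ J. Then every element b ∈ B whose image in B/JB is nilpotent satisfies b^{qn} ∈ JB. (This reduces bounding radical indices of fibers of B over A to bounding those of the subring C when the function field extension of B over C is purely inseparable.) -/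
/-!
Some positive power of every element of `B` lies in `C`, so `B` is integral over `C`. By lying over,
every prime of `C` containing `J` is contracted from a prime of `B` containing `JB`, hence
`√(JB) ∩ C = √J`. If `b ∈ √(JB)`, then `b ^ q ∈ √(JB) ∩ C = √J`, and so `(b ^ q) ^ n ∈ J`.
-/

theorem isNilpotent_quotient_mk_iff_mem_radical {R : Type*} [CommRing R] {I : Ideal R} {x : R} :
    IsNilpotent (Ideal.Quotient.mk I x) ↔ x ∈ I.radical := by
  simp only [IsNilpotent, ← map_pow, Ideal.Quotient.eq_zero_iff_mem, Ideal.mem_radical_iff]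

section Integral

variable {R S : Type*} [CommRing R] [CommRing S] [Algebra R S]

theorem algebra_isIntegral_of_forall_pow_mem_range {q : ℕ} (hq : 0 < q)
    (hpow : ∀ b : S, b ^ q ∈ (algebraMap R S).range) : Algebra.IsIntegral R S where
  isIntegral b := by
    obtain ⟨c, hc⟩ := hpow b
    exact .of_pow hq (hc ▸ isIntegral_algebraMap)

theorem comap_radical_map_eq_radical_of_isIntegral [Algebra.IsIntegral R S] {J : Ideal R}
    (hker : RingHom.ker (algebraMap R S) ≤ J.radical) :
    (J.map (algebraMap R S)).radical.comap (algebraMap R S) = J.radical := by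
  apply le_antisymm
  · rw [J.radical_eq_sInf]
    refine le_sInf fun P ⟨hJP, hP⟩ ↦ ?_
    have hkerP : RingHom.ker (algebraMap R S) ≤ P := hker.trans (hP.radical_le_iff.mpr hJP)
    obtain ⟨Q, -, hQ, rfl⟩ := Ideal.exists_ideal_over_prime_of_isIntegral P (⊥ : Ideal S) hkerP
    exact Ideal.comap_mono (hQ.radical_le_iff.mpr (Ideal.map_le_iff_le_comap.mpr hJP))
  · rw [Ideal.comap_radical]
    exact Ideal.radical_mono Ideal.le_comap_map

theorem radical_index_reduction_purely_inseparable_general [Algebra.IsIntegral R S] {J : Ideal R}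
    (hker : RingHom.ker (algebraMap R S) ≤ J.radical) {n : ℕ}
    (hJ : ∀ c : R, IsNilpotent (Ideal.Quotient.mk J c) → c ^ n ∈ J)
    {q : ℕ} (hq : 0 < q) {b : S} (hbq : b ^ q ∈ (algebraMap R S).range)
    (hb : IsNilpotent (Ideal.Quotient.mk (J.map (algebraMap R S)) b)) :
    b ^ (q * n) ∈ J.map (algebraMap R S) := by
  obtain ⟨c, hc⟩ := hbq
  have hc_rad : c ∈ J.radical := by
    rw [← comap_radical_map_eq_radical_of_isIntegral hker, Ideal.mem_comap, hc]
    exact Ideal.pow_mem_of_mem _ (isNilpotent_quotient_mk_iff_mem_radical.mp hb) q hq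
  have hcn : c ^ n ∈ J := hJ c (isNilpotent_quotient_mk_iff_mem_radical.mpr hc_rad)
  rw [pow_mul, ← hc, ← map_pow]
  exact Ideal.mem_map_of_mem _ hcn

end Integral

/-- Let `C ⊆ B` be an inclusion of commutative rings and `q` a positive integer
with `b ^ q ∈ C` for every `b ∈ B`.  Let `J ⊆ C` be an ideal such that the natural map
`C ⧸ J → B ⧸ JB` is injective (i.e. `JB ∩ C = J`).  If every `c ∈ C` nilpotent modulo `J`
satisfies `c ^ n ∈ J`, then every `b ∈ B` nilpotent modulo `JB` satisfies `b ^ (q * n) ∈ JB`. -/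
theorem radical_index_reduction_purely_inseparable
    (B : Type*) [CommRing B] (C : Subring B) (q : ℕ) (hq : 0 < q)
    (hpow : ∀ b : B, b ^ q ∈ C)
    (J : Ideal C)
    (hinj : ∀ c : C, (c : B) ∈ J.map C.subtype → c ∈ J)
    (n : ℕ) (hn : 0 < n)
    (hC : ∀ c : C, IsNilpotent (Ideal.Quotient.mk J c) → c ^ n ∈ J)
    (b : B) (hb : IsNilpotent (Ideal.Quotient.mk (J.map C.subtype) b)) :
    b ^ (q * n) ∈ J.map C.subtype := by
  have hint : Algebra.IsIntegral C B :=
    algebra_isIntegral_of_forall_pow_mem_range hq fun x ↦ ⟨⟨x ^ q, hpow x⟩, rfl⟩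
  exact radical_index_reduction_purely_inseparable_general (by simp) hC hq ⟨⟨b ^ q, hpow b⟩, rfl⟩ hb
end
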